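/- arXiv:2010.04113 — 3 statements merged into one kernel-verified Lean document; each statement's English description precedes it below -/
import Mathlib

section
/- Fix an integer r ≥ 1 and let n_2 = 3r − 1 (which equals R_2(rK_2)). Then R̃_2(rK_2; n_2) = 3r − 2 = n_2 − 1. Equivalently: (1) Builder has a strategy that, playing on K_{3r−1} with 2 colors, guarantees within 3r − 2 moves that some color class contains r pairwise disjoint edges, against every Painter strategy; and (2) Painter has a strategy such that for every way Builder adaptively selects 3r − 3 distinct edges of K_{3r−1}, after these moves neither color class contains r pairwise disjoint edges. -/
open Finset

/-- Two edges of a complete graph (elements of `Sym2 (Fin n)`) are disjoint if they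
share no vertex. -/
def EdgeDisjoint {n : ℕ} (e f : Sym2 (Fin n)) : Prop := ∀ v, v ∈ e → v ∉ f

/-- A finite set of elements of `Sym2 (Fin n)` is a matching if each element is a genuine
(non-loop) edge and the edges are pairwise disjoint. -/
def IsMatchingIn {n : ℕ} (M : Finset (Sym2 (Fin n))) : Prop :=
  (∀ e ∈ M, ¬ e.IsDiag) ∧ (M : Set (Sym2 (Fin n))).Pairwise EdgeDisjoint

/-- A history of the online Ramsey game on `K_n` with `t` colours: the list of
edges played so far, each together with the colour Painter gave it. -/
abbrev GameHistory (n t : ℕ) := List (Sym2 (Fin n) × Fin t)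

/-- A Builder strategy: given the history so far, select the next edge. -/
abbrev BuilderStrategy (n t : ℕ) := GameHistory n t → Sym2 (Fin n)

/-- A Painter strategy: given the history so far and the newly selected edge,
choose a colour for it. -/
abbrev PainterStrategy (n t : ℕ) := GameHistory n t → Sym2 (Fin n) → Fin t

/-- The history after `k` moves when Builder plays strategy `B` against Painter
strategy `P`. -/
def gamePlay {n t : ℕ} (B : BuilderStrategy n t) (P : PainterStrategy n t) :
    ℕ → GameHistory n t
  | 0 => []
  | k + 1 =>
      let h := gamePlay B P k
      h ++ [(B h, P h (B h))]

/-- Builder plays legally for the first `k` moves against `P`: every selected edge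
is a genuine (non-loop) edge not selected before. -/
def BuilderValid {n t : ℕ} (B : BuilderStrategy n t) (P : PainterStrategy n t)
    (k : ℕ) : Prop :=
  ∀ j < k, ¬ (B (gamePlay B P j)).IsDiag ∧
    B (gamePlay B P j) ∉ (gamePlay B P j).map Prod.fst

/-- The history `h` contains, for some colour `i`, a matching of `r i` edges all
coloured `i`. -/
def HistoryHasMatching (n t : ℕ) (r : Fin t → ℕ) (h : GameHistory n t) : Prop :=
  ∃ i : Fin t, ∃ M : Finset (Sym2 (Fin n)),
    M.card = r i ∧ IsMatchingIn M ∧ ∀ e ∈ M, (e, i) ∈ h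

/-- Builder can force, within `k` legal moves on `K_n` with `t` colours, some colour
`i` to contain a matching of `r i` edges, against every Painter strategy. -/
def BuilderWinsIn (n t : ℕ) (r : Fin t → ℕ) (k : ℕ) : Prop :=
  ∃ B : BuilderStrategy n t, (∀ P : PainterStrategy n t, BuilderValid B P k) ∧
    ∀ P : PainterStrategy n t, HistoryHasMatching n t r (gamePlay B P k)

/-- The restricted online Ramsey number `R̃(r₁K₂,…,r_tK₂; n)`: the least `k` such
that Builder can force a win within `k` moves. -/
noncomputable def restrictedOnlineRamsey (n t : ℕ) (r : Fin t → ℕ) : ℕ :=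
  sInf {k | BuilderWinsIn n t r k}

/-- A colouring `c` of (the edges of) `K_N` with `t` colours contains, for some colour
`i`, a matching of `r i` edges all coloured `i`. -/
def ColoringHasMatching (N t : ℕ) (r : Fin t → ℕ) (c : Sym2 (Fin N) → Fin t) : Prop :=
  ∃ i : Fin t, ∃ M : Finset (Sym2 (Fin N)),
    M.card = r i ∧ IsMatchingIn M ∧ ∀ e ∈ M, c e = i

/-- The classical Ramsey number `R(r₁K₂,…,r_tK₂)`: the least `N` such that every
`t`-colouring of the edges of `K_N` contains, for some `i`, a matching of `r i`
edges in colour `i`. -/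
noncomputable def matchingRamsey (t : ℕ) (r : Fin t → ℕ) : ℕ :=
  sInf {N | ∀ c : Sym2 (Fin N) → Fin t, ColoringHasMatching N t r c}

/-! ### General facts -/

lemma gamePlay_length {n t : ℕ} (B : BuilderStrategy n t) (P : PainterStrategy n t) (k : ℕ) :
    (gamePlay B P k).length = k := by
  induction k with
  | zero => rfl
  | succ k ih => simp [gamePlay, ih]

lemma isMatchingIn_insert {n : ℕ} {M : Finset (Sym2 (Fin n))} (hM : IsMatchingIn M)
    {a b : Fin n} (hab : a ≠ b) (ha : ∀ e ∈ M, a ∉ e) (hb : ∀ e ∈ M, b ∉ e) :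
    IsMatchingIn (insert s(a, b) M) ∧ (insert s(a, b) M).card = M.card + 1 := by
  refine ⟨⟨?_, ?_⟩, ?_⟩
  · intro e he
    rcases Finset.mem_insert.1 he with rfl | he
    · simpa using hab
    · exact hM.1 e he
  · intro e he f hf hef v hv hv'
    simp only [Finset.coe_insert, Set.mem_insert_iff, Finset.mem_coe] at he hf
    rcases he with rfl | he <;> rcases hf with rfl | hf
    · exact hef rfl
    · rcases Sym2.mem_iff.1 hv with rfl | rfl
      · exact ha _ hf hv'
      · exact hb _ hf hv'
    · rcases Sym2.mem_iff.1 hv' with rfl | rfl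
      · exact ha _ he hv
      · exact hb _ he hv
    · exact hM.2 he hf hef v hv hv'
  · apply Finset.card_insert_of_notMem
    intro h
    exact ha _ h (by simp)

/-! ### Builder's strategy -/

/-- Builder's invariant: `m` vertex-disjoint two-coloured cherries, plus a monochromatic path
`l`, together using every vertex touched so far. -/
def BGood {n : ℕ} (h : GameHistory n 2) : Prop :=
  ∃ (U : Finset (Fin n)) (m : ℕ) (M : Fin 2 → Finset (Sym2 (Fin n))) (l : List (Fin n))
    (c : Fin 2),
    U.card = h.length + 1 ∧ (∀ p ∈ h, ∀ v ∈ p.1, v ∈ U) ∧ l.Nodup ∧ (∀ v ∈ l, v ∈ U) ∧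
    l.IsChain (fun a b => (s(a, b), c) ∈ h) ∧
    (∀ i, (M i).card = m ∧ IsMatchingIn (M i) ∧ ∀ e ∈ M i, (e, i) ∈ h ∧ ∀ v ∈ e, v ∉ l) ∧
    U.card = 3 * m + l.length

lemma bgood_nil {n : ℕ} (hn : 0 < n) : BGood ([] : GameHistory n 2) := by
  refine ⟨{⟨0, hn⟩}, 0, fun _ => ∅, [⟨0, hn⟩], 0, ?_⟩
  simp [IsMatchingIn]

lemma bgood_step {n : ℕ} (h : GameHistory n 2) (hg : BGood h) (hl : h.length + 1 < n) :
    ∃ e : Sym2 (Fin n), ¬ e.IsDiag ∧ e ∉ h.map Prod.fst ∧ ∀ c, BGood (h ++ [(e, c)]) := by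
  obtain ⟨U, m, M, l, c, hU, hhU, hnd, hlU, hch, hM, hcard⟩ := hg
  obtain ⟨w, hw⟩ : ∃ w, w ∉ U := by
    by_contra hcon
    push Not at hcon
    have : U = Finset.univ := by ext; simp [hcon]
    rw [this] at hU
    simp at hU
    omega
  have hMw : ∀ i, ∀ e ∈ M i, w ∉ e := fun i e he hwe => hw (hhU _ ((hM i).2.2 e he).1 w hwe)
  have key : ∀ a ∈ U, ¬ (s(a, w) : Sym2 (Fin n)).IsDiag ∧ s(a, w) ∉ h.map Prod.fst := by
    intro a ha
    refine ⟨?_, ?_⟩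
    · simp only [Sym2.mk_isDiag_iff]
      rintro rfl; exact hw ha
    · intro hmem
      obtain ⟨p, hp, hpe⟩ := List.mem_map.1 hmem
      exact hw (hhU p hp w (by rw [hpe]; simp))
  have hU' : ∀ a c', (insert w U).card = (h ++ [(s(a, w), c')]).length + 1 := by
    intro a c'
    rw [Finset.card_insert_of_notMem hw, hU]; simp
  have hhU' : ∀ a ∈ U, ∀ c' : Fin 2, ∀ p ∈ h ++ [(s(a, w), c')], ∀ v ∈ p.1, v ∈ insert w U := by
    intro a ha c' p hp v hv
    rcases List.mem_append.1 hp with hp | hp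
    · exact Finset.mem_insert_of_mem (hhU p hp v hv)
    · simp only [List.mem_singleton] at hp
      subst hp
      rcases Sym2.mem_iff.1 hv with rfl | rfl
      · exact Finset.mem_insert_of_mem ha
      · simp
  match l, hnd, hlU, hch, hM, hcard with
  | [], _, _, _, hM, hcard =>
    obtain ⟨a, ha⟩ : U.Nonempty := by rw [← Finset.card_pos]; omega
    refine ⟨s(a, w), (key a ha).1, (key a ha).2, fun c' => ?_⟩
    refine ⟨insert w U, m, M, [w], c, hU' a c', hhU' a ha c', by simp, by simp, by simp, ?_, ?_⟩
    · intro i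
      refine ⟨(hM i).1, (hM i).2.1, fun e he => ⟨?_, ?_⟩⟩
      · exact List.mem_append_left _ ((hM i).2.2 e he).1
      · intro v hv hvl
        simp only [List.mem_singleton] at hvl
        subst hvl
        exact hMw i e he hv
    · rw [Finset.card_insert_of_notMem hw, hcard]; simp
  | [a], _, hlU, _, hM, hcard =>
    have ha := hlU a (by simp)
    have haw : w ≠ a := by rintro rfl; exact hw ha
    refine ⟨s(a, w), (key a ha).1, (key a ha).2, fun c' => ?_⟩
    refine ⟨insert w U, m, M, [w, a], c', hU' a c', hhU' a ha c', by simp [haw],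
      by simp [ha], by simp [Sym2.eq_swap], ?_, ?_⟩
    · intro i
      refine ⟨(hM i).1, (hM i).2.1, fun e he => ⟨?_, ?_⟩⟩
      · exact List.mem_append_left _ ((hM i).2.2 e he).1
      · intro v hv hvl
        rcases List.mem_cons.1 hvl with rfl | hvl
        · exact hMw i e he hv
        · exact ((hM i).2.2 e he).2 v hv hvl
    · rw [Finset.card_insert_of_notMem hw, hcard]; simp
  | a :: b :: rest, hnd, hlU, hch, hM, hcard =>
    have ha := hlU a (by simp)
    have hwl : w ∉ a :: b :: rest := fun hwl => hw (hlU w hwl)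
    refine ⟨s(a, w), (key a ha).1, (key a ha).2, fun c' => ?_⟩
    by_cases hc : c' = c
    · subst hc
      refine ⟨insert w U, m, M, w :: a :: b :: rest, c', hU' a c', hhU' a ha c',
        List.nodup_cons.2 ⟨hwl, hnd⟩, ?_, ?_, ?_, ?_⟩
      · intro v hv
        rcases List.mem_cons.1 hv with rfl | hv
        · simp
        · exact Finset.mem_insert_of_mem (hlU v hv)
      · refine List.isChain_cons_cons.2 ⟨by simp [Sym2.eq_swap], ?_⟩
        exact hch.imp (fun x y hxy => List.mem_append_left _ hxy)
      · intro i
        refine ⟨(hM i).1, (hM i).2.1, fun e he => ⟨?_, ?_⟩⟩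
        · exact List.mem_append_left _ ((hM i).2.2 e he).1
        · intro v hv hvl
          rcases List.mem_cons.1 hvl with rfl | hvl
          · exact hMw i e he hv
          · exact ((hM i).2.2 e he).2 v hv hvl
      · rw [Finset.card_insert_of_notMem hw, hcard]; simp; omega
    · have hch' := List.isChain_cons_cons.1 hch
      have hnd1 := List.nodup_cons.1 hnd
      have hnd2 := List.nodup_cons.1 hnd1.2
      have haw : a ≠ w := by rintro rfl; exact hw ha
      have hab : a ≠ b := by rintro rfl; exact hnd1.1 (by simp)
      have har : a ∉ rest := fun hh => hnd1.1 (List.mem_cons_of_mem _ hh)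
      have hwr : w ∉ rest := fun hh => hwl (by simp [hh])
      have hMa : ∀ i, ∀ e ∈ M i, a ∉ e := fun i e he hae =>
        ((hM i).2.2 e he).2 a hae (by simp)
      have hMb : ∀ i, ∀ e ∈ M i, b ∉ e := fun i e he hbe =>
        ((hM i).2.2 e he).2 b hbe (by simp)
      have hMr : ∀ i, ∀ e ∈ M i, ∀ v ∈ e, v ∉ rest := fun i e he v hv hvr =>
        ((hM i).2.2 e he).2 v hv (by simp [hvr])
      refine ⟨insert w U, m + 1,
        fun i => if i = c then insert s(a, b) (M i) else insert s(a, w) (M i), rest, c,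
        hU' a c', hhU' a ha c', hnd2.2, ?_, ?_, ?_, ?_⟩
      · intro v hv
        exact Finset.mem_insert_of_mem (hlU v (by simp [hv]))
      · exact hch'.2.tail.imp (fun x y hxy => List.mem_append_left _ hxy)
      · intro i
        by_cases hi : i = c
        · simp only [hi, if_true]
          obtain ⟨h1, h2⟩ := isMatchingIn_insert (hM c).2.1 hab (hMa c) (hMb c)
          refine ⟨by rw [h2, (hM c).1], h1, fun e he => ?_⟩
          rcases Finset.mem_insert.1 he with rfl | he
          · refine ⟨List.mem_append_left _ hch'.1, fun v hv => ?_⟩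
            rcases Sym2.mem_iff.1 hv with rfl | rfl
            · exact har
            · exact hnd2.1
          · exact ⟨List.mem_append_left _ ((hM c).2.2 e he).1, hMr c e he⟩
        · simp only [hi, if_false]
          have hic : i = c' := by omega
          obtain ⟨h1, h2⟩ := isMatchingIn_insert (hM i).2.1 haw (hMa i) (hMw i)
          refine ⟨by rw [h2, (hM i).1], h1, fun e he => ?_⟩
          rcases Finset.mem_insert.1 he with rfl | he
          · refine ⟨by simp [hic], fun v hv => ?_⟩
            rcases Sym2.mem_iff.1 hv with rfl | rfl
            · exact har
            · exact hwr
          · exact ⟨List.mem_append_left _ ((hM i).2.2 e he).1, hMr i e he⟩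
      · rw [Finset.card_insert_of_notMem hw, hcard]; simp; omega

lemma path_matching {n : ℕ} (h : GameHistory n 2) (c : Fin 2) :
    ∀ (k : ℕ) (l : List (Fin n)) (M : Finset (Sym2 (Fin n))), l.length ≤ k → l.Nodup →
      l.IsChain (fun a b => (s(a, b), c) ∈ h) → IsMatchingIn M →
      (∀ e ∈ M, (e, c) ∈ h ∧ ∀ v ∈ e, v ∉ l) →
      ∃ M' : Finset (Sym2 (Fin n)), M'.card = M.card + l.length / 2 ∧ IsMatchingIn M' ∧
        ∀ e ∈ M', (e, c) ∈ h := by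
  intro k
  induction k with
  | zero =>
    intro l M hl _ _ hM hM'
    exact ⟨M, by simp [Nat.le_zero.1 hl], hM, fun e he => (hM' e he).1⟩
  | succ k ih =>
    intro l M hl hnd hch hM hM'
    match l, hl, hnd, hch, hM' with
    | [], _, _, _, hM' => exact ⟨M, by simp, hM, fun e he => (hM' e he).1⟩
    | [a], _, _, _, hM' => exact ⟨M, by simp, hM, fun e he => (hM' e he).1⟩
    | a :: b :: rest, hl, hnd, hch, hM' =>
      have hch' := List.isChain_cons_cons.1 hch
      have hnd1 := List.nodup_cons.1 hnd
      have hnd2 := List.nodup_cons.1 hnd1.2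
      have hab : a ≠ b := by rintro rfl; exact hnd1.1 (by simp)
      have har : a ∉ rest := fun hh => hnd1.1 (List.mem_cons_of_mem _ hh)
      obtain ⟨h1, h2⟩ := isMatchingIn_insert hM hab
        (fun e he hae => (hM' e he).2 a hae (by simp))
        (fun e he hbe => (hM' e he).2 b hbe (by simp))
      obtain ⟨M', h3, h4, h5⟩ := ih rest (insert s(a, b) M)
        (by simp at hl; omega) hnd2.2 hch'.2.tail h1 (by
          intro e he
          rcases Finset.mem_insert.1 he with rfl | he
          · refine ⟨hch'.1, fun v hv => ?_⟩
            rcases Sym2.mem_iff.1 hv with rfl | rfl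
            · exact har
            · exact hnd2.1
          · exact ⟨(hM' e he).1, fun v hv hvr => (hM' e he).2 v hv (by simp [hvr])⟩)
      refine ⟨M', ?_, h4, h5⟩
      rw [h3, h2]; simp; omega

lemma bgood_final {n r : ℕ} (hn : n + 1 = 3 * r) (h : GameHistory n 2) (hg : BGood h)
    (hl : h.length + 1 = n) : HistoryHasMatching n 2 (fun _ => r) h := by
  obtain ⟨U, m, M, l, c, hU, hhU, hnd, hlU, hch, hM, hcard⟩ := hg
  obtain ⟨M', h1, h2, h3⟩ := path_matching h c l.length l (M c) le_rfl hnd hch (hM c).2.1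
    (hM c).2.2
  have hc := (hM c).1
  obtain ⟨N, hN, hNr⟩ := Finset.exists_subset_card_eq (s := M') (n := r) (by omega)
  exact ⟨c, N, hNr, ⟨fun e he => h2.1 e (hN he), h2.2.mono (by exact_mod_cast hN)⟩,
    fun e he => h3 e (hN he)⟩

lemma builder_wins {n r : ℕ} (hr : 1 ≤ r) (hn : n + 1 = 3 * r) :
    BuilderWinsIn n 2 (fun _ => r) (n - 1) := by
  classical
  have hn0 : 0 < n := by omega
  let B : BuilderStrategy n 2 := fun h =>
    if hh : BGood h ∧ h.length + 1 < n then (bgood_step h hh.1 hh.2).choose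
    else s(⟨0, hn0⟩, ⟨0, hn0⟩)
  have hB : ∀ h, BGood h → h.length + 1 < n → ¬ (B h).IsDiag ∧ B h ∉ h.map Prod.fst ∧
      ∀ c, BGood (h ++ [(B h, c)]) := by
    intro h h1 h2
    have : B h = (bgood_step h h1 h2).choose := by simp only [B]; rw [dif_pos ⟨h1, h2⟩]
    rw [this]
    exact (bgood_step h h1 h2).choose_spec
  have hgood : ∀ P j, j ≤ n - 1 → BGood (gamePlay B P j) := by
    intro P j
    induction j with
    | zero => intro _; exact bgood_nil hn0
    | succ j ih =>
      intro hj
      exact (hB _ (ih (by omega)) (by rw [gamePlay_length]; omega)).2.2 _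
  refine ⟨B, fun P j hj => ?_, fun P => ?_⟩
  · have := hB _ (hgood P j hj.le) (by rw [gamePlay_length]; omega)
    exact ⟨this.1, this.2.1⟩
  · exact bgood_final hn _ (hgood P _ le_rfl) (by rw [gamePlay_length]; omega)

/-! ### Painter's strategy -/

/-- Painter's invariant: colour `i` is covered by the vertices of `C i` and the undecided pairs
`Q i`; `F` contains all vertices that are in neither. -/
def PGood {n : ℕ} (r : ℕ) (h : GameHistory n 2) : Prop :=
  ∃ (C : Fin 2 → Finset (Fin n)) (Q : Fin 2 → Finset (Sym2 (Fin n))) (F : Finset (Fin n)),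
    (∀ p ∈ h, (∃ v ∈ C p.2, v ∈ p.1) ∨ p.1 ∈ Q p.2) ∧
    (∀ v, v ∈ F ∨ (∃ i, v ∈ C i) ∨ ∃ i, ∃ p ∈ Q i, v ∈ p) ∧
    (∀ i, (C i).card + (Q i).card + 1 ≤ r) ∧
    3 * (((C 0).card + (Q 0).card) + ((C 1).card + (Q 1).card)) + F.card ≤ n + h.length

lemma pgood_nil {n r : ℕ} (hr : 1 ≤ r) : PGood r ([] : GameHistory n 2) :=
  ⟨fun _ => ∅, fun _ => ∅, Finset.univ, by simp, by simp, by simpa using hr, by simp⟩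

lemma pgood_step {n r : ℕ} (hn : n + 1 = 3 * r) (h : GameHistory n 2) (hg : PGood r h)
    (e : Sym2 (Fin n)) (he : ¬ e.IsDiag) (hl : h.length + 3 < 3 * r) :
    ∃ c, PGood r (h ++ [(e, c)]) := by
  obtain ⟨C, Q, F, hcov, hF, hr, hcard⟩ := hg
  by_cases h1 : ∃ i, ∃ v ∈ C i, v ∈ e
  · obtain ⟨i, v, hv, hve⟩ := h1
    refine ⟨i, C, Q, F, ?_, hF, hr, by simp; omega⟩
    intro p hp
    rcases List.mem_append.1 hp with hp | hp
    · exact hcov p hp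
    · simp only [List.mem_singleton] at hp
      subst hp
      exact Or.inl ⟨v, hv, hve⟩
  by_cases h2 : ∃ i, ∃ p ∈ Q i, ∃ v ∈ p, v ∈ e
  · obtain ⟨i, p, hp, x, hxp, hxe⟩ := h2
    obtain ⟨y, rfl⟩ := Sym2.mem_iff_exists.1 hxp
    have hci : (insert x (C i)).card ≤ (C i).card + 1 := Finset.card_insert_le _ _
    have hqi : ((Q i).erase s(x, y)).card + 1 = (Q i).card := Finset.card_erase_add_one hp
    have hfi : (insert y F).card ≤ F.card + 1 := Finset.card_insert_le _ _
    refine ⟨i, Function.update C i (insert x (C i)), Function.update Q i ((Q i).erase s(x, y)),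
      insert y F, ?_, ?_, ?_, ?_⟩
    · intro p hp
      rcases List.mem_append.1 hp with hp | hp
      · by_cases hpi : p.2 = i
        · rw [hpi]
          simp only [Function.update_self]
          rcases hcov p hp with ⟨v, hv, hvp⟩ | hq
          · exact Or.inl ⟨v, Finset.mem_insert_of_mem (hpi ▸ hv), hvp⟩
          · by_cases hpe : p.1 = s(x, y)
            · exact Or.inl ⟨x, by simp, by simp [hpe]⟩
            · exact Or.inr (Finset.mem_erase.2 ⟨hpe, hpi ▸ hq⟩)
        · simp only [Function.update_of_ne hpi]
          exact hcov p hp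
      · simp only [List.mem_singleton] at hp
        subst hp
        exact Or.inl ⟨x, by simp, hxe⟩
    · intro v
      by_cases hvy : v = y
      · left; simp [hvy]
      by_cases hvx : v = x
      · right; left; exact ⟨i, by simp [hvx]⟩
      rcases hF v with hv | ⟨j, hj⟩ | ⟨j, p, hpj, hvp⟩
      · left; exact Finset.mem_insert_of_mem hv
      · right; left
        refine ⟨j, ?_⟩
        by_cases hji : j = i
        · subst hji; simp [hj]
        · simpa [Function.update_of_ne hji] using hj
      · right; right
        refine ⟨j, p, ?_, hvp⟩
        by_cases hji : j = i
        · subst hji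
          simp only [Function.update_self]
          refine Finset.mem_erase.2 ⟨?_, hpj⟩
          rintro rfl
          rcases Sym2.mem_iff.1 hvp with hh | hh
          · exact hvx hh
          · exact hvy hh
        · simpa [Function.update_of_ne hji] using hpj
    · intro j
      have hrj := hr j
      by_cases hji : j = i
      · subst hji
        simp only [Function.update_self]
        omega
      · simpa [Function.update_of_ne hji] using hrj
    · simp only [List.length_append, List.length_singleton]
      fin_cases i
      · simp at hci hqi ⊢
        omega
      · simp at hci hqi ⊢
        omega
  · have hfree : ∀ v ∈ e, v ∈ F := by
      intro v hv
      rcases hF v with hv' | ⟨j, hj⟩ | ⟨j, p, hp, hvp⟩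
      · exact hv'
      · exact absurd ⟨j, v, hj, hv⟩ h1
      · exact absurd ⟨j, p, hp, v, hvp, hv⟩ h2
    obtain ⟨x, y, rfl⟩ : ∃ x y, e = s(x, y) := by
      induction e with
      | h x y => exact ⟨x, y, rfl⟩
    have hxy : x ≠ y := by simpa using he
    have hx := hfree x (by simp)
    have hy := hfree y (by simp)
    have hyx : y ∈ F.erase x := Finset.mem_erase.2 ⟨hxy.symm, hy⟩
    have hF1 : (F.erase x).card + 1 = F.card := Finset.card_erase_add_one hx
    have hF2 : ((F.erase x).erase y).card + 1 = (F.erase x).card :=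
      Finset.card_erase_add_one hyx
    obtain ⟨i, hi⟩ : ∃ i, (C i).card + (Q i).card + 2 ≤ r := by
      by_contra hcon
      push Not at hcon
      have h0 := hcon 0
      have h1 := hcon 1
      omega
    have hqi : (insert s(x, y) (Q i)).card ≤ (Q i).card + 1 := Finset.card_insert_le _ _
    refine ⟨i, C, Function.update Q i (insert s(x, y) (Q i)), (F.erase x).erase y,
      ?_, ?_, ?_, ?_⟩
    · intro p hp
      rcases List.mem_append.1 hp with hp | hp
      · rcases hcov p hp with hv | hq
        · exact Or.inl hv
        · right
          by_cases hpi : p.2 = i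
          · rw [hpi] at hq ⊢
            simp [hq]
          · simpa [Function.update_of_ne hpi] using hq
      · simp only [List.mem_singleton] at hp
        subst hp
        right; simp
    · intro v
      by_cases hvx : v = x
      · right; right; exact ⟨i, s(x, y), by simp, by simp [hvx]⟩
      by_cases hvy : v = y
      · right; right; exact ⟨i, s(x, y), by simp, by simp [hvy]⟩
      rcases hF v with hv | hj | ⟨j, p, hp, hvp⟩
      · left; simp [hvx, hvy, hv]
      · right; left; exact hj
      · right; right
        refine ⟨j, p, ?_, hvp⟩
        by_cases hji : j = i
        · subst hji; simp [hp]
        · simpa [Function.update_of_ne hji] using hp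
    · intro j
      have hrj := hr j
      by_cases hji : j = i
      · subst hji
        simp only [Function.update_self]
        omega
      · simpa [Function.update_of_ne hji] using hrj
    · simp only [List.length_append, List.length_singleton]
      fin_cases i
      · simp at hqi ⊢
        omega
      · simp at hqi ⊢
        omega

lemma pgood_not_matching {n r : ℕ} (h : GameHistory n 2) (hg : PGood r h) :
    ¬ HistoryHasMatching n 2 (fun _ => r) h := by
  classical
  obtain ⟨C, Q, F, hcov, hF, hr, hcard⟩ := hg
  rintro ⟨i, M, hMc, hM, hMh⟩
  have h1 : (M \ Q i).card ≤ (C i).card := by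
    have hex : ∀ e ∈ M \ Q i, ∃ v ∈ C i, v ∈ e := by
      intro e he
      obtain ⟨he1, he2⟩ := Finset.mem_sdiff.1 he
      rcases hcov _ (hMh e he1) with hv | hq
      · exact hv
      · exact absurd hq he2
    rcases (M \ Q i).eq_empty_or_nonempty with hemp | ⟨e₀, he₀⟩
    · simp [hemp]
    obtain ⟨v₀, -⟩ := hex e₀ he₀
    haveI : Nonempty (Fin n) := ⟨v₀⟩
    choose! f hf1 hf2 using hex
    refine Finset.card_le_card_of_injOn f hf1 ?_
    intro e he e' he' hee
    by_contra hne
    have hm := (Finset.mem_sdiff.1 he).1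
    have hm' := (Finset.mem_sdiff.1 he').1
    exact hM.2 hm hm' hne (f e) (hf2 e he) (hee ▸ hf2 e' he')
  have h2 : M.card ≤ (M \ Q i).card + (Q i).card := by
    have := Finset.le_card_sdiff (Q i) M
    omega
  have := hr i
  simp only at hMc
  omega

lemma painter_survives {n r : ℕ} (hr : 1 ≤ r) (hn : n + 1 = 3 * r) (k : ℕ) (hk : k + 3 ≤ 3 * r) :
    ¬ BuilderWinsIn n 2 (fun _ => r) k := by
  classical
  rintro ⟨B, hB, hwin⟩
  let P : PainterStrategy n 2 := fun h e =>
    if hh : ∃ c, PGood r (h ++ [(e, c)]) then hh.choose else 0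
  have hP : ∀ h e, (∃ c, PGood r (h ++ [(e, c)])) → PGood r (h ++ [(e, P h e)]) := by
    intro h e hh
    have : P h e = hh.choose := by simp only [P]; rw [dif_pos hh]
    rw [this]
    exact hh.choose_spec
  have hgood : ∀ j, j ≤ k → PGood r (gamePlay B P j) := by
    intro j
    induction j with
    | zero => intro _; exact pgood_nil hr
    | succ j ih =>
      intro hj
      refine hP _ _ (pgood_step hn _ (ih (by omega)) _ (hB P j hj).1 ?_)
      rw [gamePlay_length]; omega
  exact pgood_not_matching _ (hgood k le_rfl) (hwin P)

/-- For `r ≥ 1` and `n₂ = 3r − 1 = R₂(rK₂)`, we have `R̃₂(rK₂; n₂) = 3r − 2 = n₂ − 1`. -/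
theorem restrictedOnlineRamsey_two_colours (r : ℕ) (hr : 1 ≤ r) :
    restrictedOnlineRamsey (3 * r - 1) 2 (fun _ => r) = 3 * r - 2 := by
  obtain ⟨n, hn⟩ : ∃ n, n + 1 = 3 * r := ⟨3 * r - 1, by omega⟩
  have e1 : 3 * r - 1 = n := by omega
  have e2 : 3 * r - 2 = n - 1 := by omega
  rw [e1, e2]
  refine le_antisymm (Nat.sInf_le (builder_wins hr hn)) ?_
  refine le_csInf ⟨_, builder_wins hr hn⟩ fun k hk => ?_
  by_contra hlt
  exact painter_survives hr hn k (by omega) hk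
end

section
/- Fix an integer r ≥ 1 and let n_3 = 4r − 2 (which equals R_3(rK_2)). Then R̃_3(rK_2; n_3) = 5r − 4. Equivalently: (1) Builder has a strategy that, playing on K_{4r−2} with 3 colors, guarantees within 5r − 4 moves that some color class contains r pairwise disjoint edges, against every Painter strategy; and (2) Painter has a strategy such that for every way Builder adaptively selects 5r − 5 distinct edges of K_{4r−2}, after these moves no color class contains r pairwise disjoint edges. -/
open Finset

/-! ### Lower bound: Painter's strategy -/

/-- Number of moves Builder must have spent on a slot. -/
def slotCost (k : ℕ) : ℕ := if k = 0 then 0 else 3 - k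

/-- Painter's invariant. -/
structure PInv (n s : ℕ) (h : GameHistory n 3) (X : Fin 2 × Fin s → Finset (Fin n)) : Prop where
  disj : ∀ i j, i ≠ j → Disjoint (X i) (X j)
  le2 : ∀ i, (X i).card ≤ 2
  low : ∀ (c : Fin 2) (e : Sym2 (Fin n)), (e, c.castSucc) ∈ h →
    ∃ x : Fin s, (X (c, x)).Nonempty ∧ ∀ v ∈ X (c, x), v ∈ e
  top : ∀ e : Sym2 (Fin n), (e, Fin.last 2) ∈ h →
    ∀ i, (X i).Nonempty ∧ ∀ v ∈ X i, v ∉ e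
  cost : ∑ i, slotCost (X i).card + h.countP (fun p => p.2 = Fin.last 2) ≤ h.length

lemma PInv_step {n s : ℕ} {h : GameHistory n 3} {X : Fin 2 × Fin s → Finset (Fin n)}
    (H : PInv n s h X) (e : Sym2 (Fin n)) (he : ¬ e.IsDiag) :
    ∃ c, ∃ X', PInv n s (h ++ [(e, c)]) X' := by
  classical
  have hupd : ∀ (i : Fin 2 × Fin s) (Y : Finset (Fin n)),
      slotCost Y.card ≤ slotCost (X i).card + 1 →
      ∑ j, slotCost ((Function.update X i Y) j).card ≤ ∑ j, slotCost (X j).card + 1 := by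
    intro i Y hY
    rw [← Finset.add_sum_erase _ _ (Finset.mem_univ i),
      ← Finset.add_sum_erase univ (fun j => slotCost (X j).card) (Finset.mem_univ i)]
    have : ∑ j ∈ univ.erase i, slotCost ((Function.update X i Y) j).card
        = ∑ j ∈ univ.erase i, slotCost (X j).card := by
      apply Finset.sum_congr rfl
      intro j hj
      rw [Function.update_of_ne (Finset.ne_of_mem_erase hj)]
    rw [this, Function.update_self]
    omega
  have hne : ∀ c : Fin 2, ¬ (c.castSucc = Fin.last 2) := fun c => (Fin.castSucc_lt_last c).ne
  by_cases hA : ∃ i, ∃ v ∈ X i, v ∈ e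
  · obtain ⟨i, v, hv, hve⟩ := hA
    have hsub : ∀ j, ∀ w ∈ Function.update X i {v} j, w ∈ X j := by
      intro j w hw
      by_cases hj : j = i
      · subst hj
        simp at hw
        rw [hw]; exact hv
      · rwa [Function.update_of_ne hj] at hw
    have hnon : ∀ j, (X j).Nonempty → (Function.update X i {v} j).Nonempty := by
      intro j hw
      by_cases hj : j = i
      · subst hj
        simp
      · rwa [Function.update_of_ne hj]
    refine ⟨i.1.castSucc, Function.update X i {v}, ?_, ?_, ?_, ?_, ?_⟩
    · intro j k hjk
      exact Finset.disjoint_of_subset_left (hsub j)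
        (Finset.disjoint_of_subset_right (hsub k) (H.disj j k hjk))
    · intro j
      exact (Finset.card_le_card (hsub j)).trans (H.le2 j)
    · intro c f hf
      rw [List.mem_append] at hf
      rcases hf with hf | hf
      · obtain ⟨x, hx, hx2⟩ := H.low c f hf
        exact ⟨x, hnon _ hx, fun w hw => hx2 w (hsub _ w hw)⟩
      · simp only [List.mem_singleton, Prod.mk.injEq] at hf
        obtain ⟨rfl, hc⟩ := hf
        have hc' : c = i.1 := Fin.castSucc_injective _ hc
        subst hc'
        refine ⟨i.2, hnon _ ⟨v, hv⟩, ?_⟩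
        intro w hw
        simp at hw
        rw [hw]; exact hve
    · intro f hf j
      rw [List.mem_append] at hf
      rcases hf with hf | hf
      · exact ⟨hnon _ (H.top f hf j).1, fun w hw => (H.top f hf j).2 w (hsub _ w hw)⟩
      · simp only [List.mem_singleton, Prod.mk.injEq] at hf
        exact absurd hf.2.symm (hne _)
    · have h1 := hupd i {v} (by
        have h2 := H.le2 i
        have h3 : 0 < (X i).card := Finset.card_pos.2 ⟨v, hv⟩
        simp only [slotCost, Finset.card_singleton]
        rw [if_neg (by omega), if_neg (by omega)]
        omega)
      have h2 := H.cost
      rw [List.countP_append, List.length_append]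
      simp only [List.countP_singleton, List.length_singleton, hne, decide_false, Bool.false_eq_true, if_false]
      omega
  · push Not at hA
    by_cases hB : ∃ i, X i = ∅
    · obtain ⟨i, hi⟩ := hB
      have hnotop : ∀ f : Sym2 (Fin n), (f, Fin.last 2) ∉ h := by
        intro f hf
        have := (H.top f hf i).1
        rw [hi] at this
        simp at this
      have hcard : e.toFinset.card = 2 := Sym2.card_toFinset_of_not_isDiag e he
      refine ⟨i.1.castSucc, Function.update X i e.toFinset, ?_, ?_, ?_, ?_, ?_⟩
      · have key : ∀ j, j ≠ i → Disjoint e.toFinset (X j) := by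
          intro j hj
          rw [Finset.disjoint_right]
          intro w hw
          rw [Sym2.mem_toFinset]
          exact hA j w hw
        intro j k hjk
        by_cases hj : j = i
        · subst hj
          rw [Function.update_self, Function.update_of_ne hjk.symm]
          exact key k hjk.symm
        · by_cases hk : k = i
          · subst hk
            rw [Function.update_self, Function.update_of_ne hj]
            exact (key j hj).symm
          · rw [Function.update_of_ne hk, Function.update_of_ne hj]
            exact H.disj j k hjk
      · intro j
        by_cases hj : j = i
        · subst hj
          rw [Function.update_self, hcard]
        · rw [Function.update_of_ne hj]
          exact H.le2 j
      · intro c f hf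
        rw [List.mem_append] at hf
        rcases hf with hf | hf
        · obtain ⟨x, hx, hx2⟩ := H.low c f hf
          have hxi : (c, x) ≠ i := by
            intro h; rw [h, hi] at hx; simp at hx
          refine ⟨x, ?_⟩
          rw [Function.update_of_ne hxi]
          exact ⟨hx, hx2⟩
        · simp only [List.mem_singleton, Prod.mk.injEq] at hf
          obtain ⟨rfl, hc⟩ := hf
          have hc' : c = i.1 := Fin.castSucc_injective _ hc
          subst hc'
          refine ⟨i.2, ?_⟩
          rw [show (i.1, i.2) = i from rfl, Function.update_self]
          refine ⟨Finset.card_pos.1 (by omega), ?_⟩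
          intro w hw
          exact Sym2.mem_toFinset.1 hw
      · intro f hf j
        rw [List.mem_append] at hf
        rcases hf with hf | hf
        · exact absurd hf (hnotop f)
        · simp only [List.mem_singleton, Prod.mk.injEq] at hf
          exact absurd hf.2.symm (hne _)
      · have h1 := hupd i e.toFinset (by
          rw [hcard, hi]
          simp [slotCost])
        have h2 := H.cost
        rw [List.countP_append, List.length_append]
        simp only [List.countP_singleton, List.length_singleton, hne, decide_false, Bool.false_eq_true, if_false]
        omega
    · push Not at hB
      refine ⟨Fin.last 2, X, H.disj, H.le2, ?_, ?_, ?_⟩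
      · intro c f hf
        rw [List.mem_append] at hf
        rcases hf with hf | hf
        · exact H.low c f hf
        · simp only [List.mem_singleton, Prod.mk.injEq] at hf
          exact absurd hf.2 (hne _)
      · intro f hf j
        rw [List.mem_append] at hf
        rcases hf with hf | hf
        · exact H.top f hf j
        · simp only [List.mem_singleton, Prod.mk.injEq] at hf
          obtain ⟨rfl, -⟩ := hf
          exact ⟨hB j, hA j⟩
      · have h2 := H.cost
        rw [List.countP_append, List.length_append]
        simp only [List.countP_singleton, List.length_singleton, decide_true, if_true]
        omega

lemma PInv_final {r : ℕ} (hr : 1 ≤ r) {h : GameHistory (4 * r - 2) 3}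
    {X : Fin 2 × Fin (r - 1) → Finset (Fin (4 * r - 2))}
    (H : PInv (4 * r - 2) (r - 1) h X)
    (hm : HistoryHasMatching (4 * r - 2) 3 (fun _ => r) h) : 5 * r - 4 ≤ h.length := by
  classical
  obtain ⟨i, M, hMc, ⟨hMd, hMp⟩, hMh⟩ := hm
  simp only at hMc
  induction i using Fin.lastCases with
  | cast c =>
    exfalso
    have : ∀ e : Sym2 (Fin (4 * r - 2)), ∃ x : Fin (r - 1), e ∈ M →
        (X (c, x)).Nonempty ∧ ∀ v ∈ X (c, x), v ∈ e := by
      intro e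
      by_cases he : e ∈ M
      · obtain ⟨x, hx⟩ := H.low c e (hMh e he)
        exact ⟨x, fun _ => hx⟩
      · by_cases h1 : r - 1 = 0
        · exfalso
          have : 0 < M.card := by omega
          obtain ⟨e', he'⟩ := Finset.card_pos.1 this
          obtain ⟨x, _⟩ := H.low c e' (hMh e' he')
          have := x.2
          omega
        · exact ⟨⟨0, by omega⟩, fun h => absurd h he⟩
    choose g hg using this
    have hinj : Set.InjOn g M := by
      intro e he f hf hef
      by_contra hne
      obtain ⟨v, hv⟩ := (hg e he).1
      have h1 := (hg e he).2 v hv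
      rw [hef] at hv
      have h2 := (hg f hf).2 v hv
      exact hMp he hf hne v h1 h2
    have h1 := Finset.card_le_card_of_injOn (t := (univ : Finset (Fin (r - 1)))) g
      (fun _ _ => by simp) hinj
    simp at h1
    omega
  | last =>
    have hne : M.Nonempty := Finset.card_pos.1 (by omega)
    obtain ⟨e0, he0⟩ := hne
    have hX : ∀ i, 1 ≤ (X i).card := fun i =>
      Finset.card_pos.2 (H.top e0 (hMh e0 he0) i).1
    have hU : (M.biUnion Sym2.toFinset).card = 2 * r := by
      rw [Finset.card_biUnion]
      · rw [Finset.sum_congr rfl (fun e he => Sym2.card_toFinset_of_not_isDiag e (hMd e he))]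
        simp [hMc, mul_comm]
      · intro e he f hf hef
        simp only [Function.onFun]
        rw [Finset.disjoint_left]
        intro v hv hv'
        rw [Sym2.mem_toFinset] at hv hv'
        exact hMp he hf hef v hv hv'
    have hV : (univ.biUnion X).card = ∑ i, (X i).card := by
      rw [Finset.card_biUnion]
      intro i _ j _ hij
      exact H.disj i j hij
    have hD : Disjoint (M.biUnion Sym2.toFinset) (univ.biUnion X) := by
      rw [Finset.disjoint_left]
      intro v hv hv'
      simp only [Finset.mem_biUnion, Sym2.mem_toFinset, Finset.mem_univ, true_and] at hv hv'
      obtain ⟨e, he, hve⟩ := hv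
      obtain ⟨i, hi⟩ := hv'
      exact (H.top e (hMh e he) i).2 v hi hve
    have htot : (M.biUnion Sym2.toFinset).card + (univ.biUnion X).card ≤ 4 * r - 2 := by
      rw [← Finset.card_union_of_disjoint hD]
      exact (Finset.card_le_univ _).trans (by simp)
    have hcost : ∑ i, slotCost (X i).card + ∑ i, (X i).card = 3 * (2 * (r - 1)) := by
      rw [← Finset.sum_add_distrib]
      have : ∀ i ∈ (univ : Finset (Fin 2 × Fin (r - 1))),
          slotCost (X i).card + (X i).card = 3 := by
        intro i _
        have h1 := hX i
        have h2 := H.le2 i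
        simp only [slotCost]
        rw [if_neg (by omega)]
        omega
      rw [Finset.sum_congr rfl this]
      simp
      ring
    have hcnt : r ≤ h.countP (fun p => p.2 = Fin.last 2) := by
      rw [List.countP_eq_length_filter]
      have : M.image (fun e => (e, Fin.last 2)) ⊆
          (h.filter (fun p => p.2 = Fin.last 2)).toFinset := by
        intro p hp
        simp only [Finset.mem_image] at hp
        obtain ⟨e, he, rfl⟩ := hp
        simp only [List.mem_toFinset, List.mem_filter]
        exact ⟨hMh e he, by simp⟩
      have h1 := Finset.card_le_card this
      rw [Finset.card_image_of_injective _ (fun a b hab => (Prod.mk.inj hab).1), hMc] at h1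
      exact h1.trans (List.toFinset_card_le _)
    have := H.cost
    omega

lemma lower_bound {r : ℕ} (hr : 1 ≤ r) {k : ℕ}
    (hk : BuilderWinsIn (4 * r - 2) 3 (fun _ => r) k) : 5 * r - 4 ≤ k := by
  classical
  obtain ⟨B, hB, hW⟩ := hk
  let P : PainterStrategy (4 * r - 2) 3 := fun h e =>
    if H : ∃ c, ∃ X, PInv (4 * r - 2) (r - 1) (h ++ [(e, c)]) X then H.choose else 0
  have key : ∀ j ≤ k, ∃ X, PInv (4 * r - 2) (r - 1) (gamePlay B P j) X := by
    intro j
    induction j with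
    | zero =>
      intro _
      refine ⟨fun _ => ∅, ?_, ?_, ?_, ?_, ?_⟩ <;> simp [gamePlay, slotCost]
    | succ j ih =>
      intro hj
      obtain ⟨X, hX⟩ := ih (by omega)
      have H := PInv_step hX (B (gamePlay B P j)) (hB P j (by omega)).1
      have hP : P (gamePlay B P j) (B (gamePlay B P j)) = H.choose := by
        simp only [P]
        rw [dif_pos H]
      simp only [gamePlay]
      rw [hP]
      exact H.choose_spec
  obtain ⟨X, hX⟩ := key k le_rfl
  have := PInv_final hr hX (hW P)
  rwa [gamePlay_length] at this

/-! ### Upper bound: Builder's strategy -/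

/-- Builder can force a win in exactly `k` further legal moves. -/
def WinsFrom (n r : ℕ) : ℕ → GameHistory n 3 → Prop
  | 0, h => HistoryHasMatching n 3 (fun _ => r) h
  | k + 1, h => ∃ e : Sym2 (Fin n), ¬ e.IsDiag ∧ e ∉ h.map Prod.fst ∧
      ∀ c, WinsFrom n r k (h ++ [(e, c)])

lemma winsIn_of_winsFrom {n r k : ℕ} (hn : 2 ≤ n) (hw : WinsFrom n r k []) :
    BuilderWinsIn n 3 (fun _ => r) k := by
  classical
  let Q : GameHistory n 3 → Sym2 (Fin n) → Prop := fun h e =>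
    ¬ e.IsDiag ∧ e ∉ h.map Prod.fst ∧ ∀ c, WinsFrom n r (k - h.length - 1) (h ++ [(e, c)])
  let B : BuilderStrategy n 3 := fun h =>
    if H : ∃ e, Q h e then H.choose else s(⟨0, by omega⟩, ⟨1, by omega⟩)
  have hB : ∀ h : GameHistory n 3, (∃ e, Q h e) → Q h (B h) := by
    intro h H
    simp only [B]
    rw [dif_pos H]
    exact H.choose_spec
  have hQ : ∀ (P : PainterStrategy n 3) (j : ℕ), j < k →
      WinsFrom n r (k - j) (gamePlay B P j) → Q (gamePlay B P j) (B (gamePlay B P j)) := by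
    intro P j hj hw
    apply hB
    obtain ⟨d, hd⟩ : ∃ d, k - j = d + 1 := ⟨k - j - 1, by omega⟩
    rw [hd] at hw
    obtain ⟨e, h1, h2, h3⟩ := hw
    refine ⟨e, h1, h2, ?_⟩
    rw [gamePlay_length, hd]
    exact h3
  have key : ∀ (P : PainterStrategy n 3) (j : ℕ), j ≤ k →
      WinsFrom n r (k - j) (gamePlay B P j) := by
    intro P j
    induction j with
    | zero => intro _; exact hw
    | succ j ih =>
      intro hj
      have h1 := hQ P j (by omega) (ih (by omega))
      have h2 := h1.2.2 (P (gamePlay B P j) (B (gamePlay B P j)))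
      rw [gamePlay_length] at h2
      exact h2
  refine ⟨B, ?_, ?_⟩
  · intro P j hj
    have h1 := hQ P j hj (key P j hj.le)
    exact ⟨h1.1, h1.2.1⟩
  · intro P
    have := key P k le_rfl
    rw [Nat.sub_self] at this
    exact this

lemma winsFrom_of_hasMatching {n r : ℕ} : ∀ (k : ℕ) (h : GameHistory n 3),
    HistoryHasMatching n 3 (fun _ => r) h → h.length + k ≤ n.choose 2 → WinsFrom n r k h := by
  classical
  intro k
  induction k with
  | zero => intro h hh _; exact hh
  | succ k ih =>
    intro h hh hl
    have : ∃ e : Sym2 (Fin n), ¬ e.IsDiag ∧ e ∉ h.map Prod.fst := by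
      by_contra hcon
      push Not at hcon
      have hsub : (univ.filter (fun e : Sym2 (Fin n) => ¬ e.IsDiag)) ⊆
          (h.map Prod.fst).toFinset := by
        intro e he
        rw [List.mem_toFinset]
        exact hcon e (Finset.mem_filter.1 he).2
      have h1 := Finset.card_le_card hsub
      have h2 : (univ.filter (fun e : Sym2 (Fin n) => ¬ e.IsDiag)).card = n.choose 2 := by
        have := Sym2.card_subtype_not_diag (α := Fin n)
        rw [Fintype.card_subtype, Fintype.card_fin] at this
        exact this
      have h3 := List.toFinset_card_le (h.map Prod.fst)
      rw [List.length_map] at h3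
      omega
    obtain ⟨e, he1, he2⟩ := this
    refine ⟨e, he1, he2, fun c => ih _ ?_ ?_⟩
    · obtain ⟨i, M, h1, h2, h3⟩ := hh
      exact ⟨i, M, h1, h2, fun f hf => List.mem_append_left _ (h3 f hf)⟩
    · simp
      omega

/-- Builder's invariant: `M` is a known matching of `m` edges inside `S`, being all the edges
played inside `S`, and `N i` is a matching of `q` edges of colour `i` outside `S`. -/
structure BInv (n : ℕ) (h : GameHistory n 3) (q m : ℕ) (S : Finset (Fin n))
    (M : Finset (Sym2 (Fin n))) (N : Fin 3 → Finset (Sym2 (Fin n))) : Prop where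
  Mmatch : IsMatchingIn M
  Mcard : M.card = m
  MS : ∀ e ∈ M, ∀ v ∈ e, v ∈ S
  Mcol : ∀ e ∈ M, ∃ c, (e, c) ∈ h
  Nmatch : ∀ i, IsMatchingIn (N i)
  Ncard : ∀ i, (N i).card = q
  Ncol : ∀ i, ∀ e ∈ N i, (e, i) ∈ h
  NS : ∀ i, ∀ e ∈ N i, ∀ v ∈ e, v ∉ S
  fresh : ∀ p ∈ h, (∀ v ∈ p.1, v ∈ S) → p.1 ∈ M

lemma EdgeDisjoint.symm' {n : ℕ} {e f : Sym2 (Fin n)} (h : EdgeDisjoint e f) :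
    EdgeDisjoint f e := fun v hv hv' => h v hv' hv

lemma isMatchingIn_union {n : ℕ} [DecidableEq (Sym2 (Fin n))] {A B : Finset (Sym2 (Fin n))}
    (hA : IsMatchingIn A) (hB : IsMatchingIn B)
    (hAB : ∀ e ∈ A, ∀ f ∈ B, EdgeDisjoint e f) :
    IsMatchingIn (A ∪ B) := by
  refine ⟨?_, ?_⟩
  · intro e he
    rcases Finset.mem_union.1 he with he | he
    · exact hA.1 e he
    · exact hB.1 e he
  · intro e he f hf hef
    rcases Finset.mem_union.1 he with he | he <;> rcases Finset.mem_union.1 hf with hf | hf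
    · exact hA.2 he hf hef
    · exact hAB e he f hf
    · exact (hAB f hf e he).symm'
    · exact hB.2 he hf hef

lemma isMatchingIn_mono {n : ℕ} {A B : Finset (Sym2 (Fin n))}
    (hB : IsMatchingIn B) (hAB : A ⊆ B) : IsMatchingIn A :=
  ⟨fun e he => hB.1 e (hAB he), fun e he f hf hef => hB.2 (hAB he) (hAB hf) hef⟩

lemma isMatchingIn_singleton {n : ℕ} {e : Sym2 (Fin n)} (he : ¬ e.IsDiag) :
    IsMatchingIn {e} := by
  refine ⟨by simpa using he, by simp⟩

/-- If a colour is popular in `M`, Builder has already won. -/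
lemma BInv.win {n r : ℕ} {h : GameHistory n 3} {q m : ℕ} {S : Finset (Fin n)}
    {M : Finset (Sym2 (Fin n))} {N : Fin 3 → Finset (Sym2 (Fin n))} (H : BInv n h q m S M N)
    (i : Fin 3) (A : Finset (Sym2 (Fin n))) (hA : A ⊆ M) (hc : ∀ e ∈ A, (e, i) ∈ h)
    (hr : r ≤ q + A.card) : HistoryHasMatching n 3 (fun _ => r) h := by
  classical
  have hdis : ∀ e ∈ N i, ∀ f ∈ A, EdgeDisjoint e f :=
    fun e he f hf v hv hv' => H.NS i e he v hv (H.MS f (hA hf) v hv')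
  have hm := isMatchingIn_union (H.Nmatch i) (isMatchingIn_mono H.Mmatch hA) hdis
  have hd : Disjoint (N i) A := by
    rw [Finset.disjoint_left]
    intro e he he'
    induction e using Sym2.ind with
    | _ x y => exact hdis _ he _ he' x (by simp) (by simp)
  have hcard : r ≤ (N i ∪ A).card := by
    rw [Finset.card_union_of_disjoint hd, H.Ncard]
    exact hr
  obtain ⟨T, hT, hTc⟩ := Finset.exists_subset_card_eq hcard
  refine ⟨i, T, hTc, isMatchingIn_mono hm hT, ?_⟩
  intro e he
  rcases Finset.mem_union.1 (hT he) with he | he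
  · exact H.Ncol i e he
  · exact hc e he

/-- Removing four vertices spanning all three colours. -/
lemma BInv.reduce {n : ℕ} {h h' : GameHistory n 3} {q m : ℕ} {S : Finset (Fin n)}
    {M : Finset (Sym2 (Fin n))} {N : Fin 3 → Finset (Sym2 (Fin n))}
    (H : BInv n h q (m + 2) S M N) (hh : ∀ p ∈ h, p ∈ h')
    {a b c d e f y z : Fin n} {Q : Finset (Fin n)}
    (h1 : s(a, b) ∈ M) (h2 : s(c, d) ∈ M) (h3 : s(e, f) ∈ M)
    (h12 : s(a, b) ≠ s(c, d)) (h13 : s(a, b) ≠ s(e, f)) (h23 : s(c, d) ≠ s(e, f))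
    (hyz : y ≠ z) (hy : y ∉ Q) (hz : z ∉ Q)
    (hy6 : y = a ∨ y = b ∨ y = c ∨ y = d ∨ y = e ∨ y = f)
    (hz6 : z = a ∨ z = b ∨ z = c ∨ z = d ∨ z = e ∨ z = f)
    (hQ6 : ∀ v ∈ Q, v = a ∨ v = b ∨ v = c ∨ v = d ∨ v = e ∨ v = f)
    (h6 : ∀ v, (v = a ∨ v = b ∨ v = c ∨ v = d ∨ v = e ∨ v = f) → v ∉ Q → v = y ∨ v = z)
    (hcol : ∃ i, (s(y, z), i) ∈ h')
    (tri : ∀ x : Fin 3, ∃ E : Sym2 (Fin n), ¬ E.IsDiag ∧ (E, x) ∈ h' ∧ ∀ v ∈ E, v ∈ Q)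
    (hnew : ∀ p ∈ h', p ∈ h ∨ p.1 = s(y, z) ∨ ∃ v ∈ p.1, v ∈ Q) :
    ∃ S' M' N', BInv n h' (q + 1) m S' M' N' := by
  classical
  choose E hE1 hE2 hE3 using tri
  have hout : ∀ g ∈ M \ {s(a, b), s(c, d), s(e, f)}, ∀ v ∈ g,
      ¬ (v = a ∨ v = b ∨ v = c ∨ v = d ∨ v = e ∨ v = f) := by
    intro g hg v hv hv6
    simp only [Finset.mem_sdiff, Finset.mem_insert, Finset.mem_singleton, not_or] at hg
    obtain ⟨hgM, hg1, hg2, hg3⟩ := hg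
    have k1 := H.Mmatch.2 hgM h1 hg1 v hv
    have k2 := H.Mmatch.2 hgM h2 hg2 v hv
    have k3 := H.Mmatch.2 hgM h3 hg3 v hv
    simp only [Sym2.mem_iff, not_or] at k1 k2 k3
    tauto
  have h6S : ∀ v, (v = a ∨ v = b ∨ v = c ∨ v = d ∨ v = e ∨ v = f) → v ∈ S := by
    intro v hv
    rcases hv with rfl | rfl | rfl | rfl | rfl | rfl
    · exact H.MS _ h1 _ (by simp)
    · exact H.MS _ h1 _ (by simp)
    · exact H.MS _ h2 _ (by simp)
    · exact H.MS _ h2 _ (by simp)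
    · exact H.MS _ h3 _ (by simp)
    · exact H.MS _ h3 _ (by simp)
  have hyznot : s(y, z) ∉ M \ {s(a, b), s(c, d), s(e, f)} := by
    intro hmem
    exact hout _ hmem y (by simp) hy6
  have hthree : ∀ u w : Fin n, s(u, w) ∈ M →
      (u = a ∨ u = b ∨ u = c ∨ u = d ∨ u = e ∨ u = f) →
      (w = a ∨ w = b ∨ w = c ∨ w = d ∨ w = e ∨ w = f) → u ∉ Q → w ∉ Q →
      s(u, w) = s(y, z) := by
    intro u w huw hu6 hw6 hu hw
    have hne : u ≠ w := by
      intro h; exact H.Mmatch.1 _ huw (by simpa using h)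
    rcases h6 u hu6 hu with rfl | rfl <;> rcases h6 w hw6 hw with rfl | rfl
    · exact absurd rfl hne
    · rfl
    · exact Sym2.eq_swap
    · exact absurd rfl hne
  have hEN : ∀ i, ∀ g ∈ N i, EdgeDisjoint (E i) g :=
    fun i g hg v hv hv' => H.NS i g hg v hv' (h6S v (hQ6 v (hE3 i v hv)))
  refine ⟨S \ Q, {s(y, z)} ∪ (M \ {s(a, b), s(c, d), s(e, f)}), fun i => {E i} ∪ N i,
    ?_, ?_, ?_, ?_, ?_, ?_, ?_, ?_, ?_⟩
  · apply isMatchingIn_union (isMatchingIn_singleton (by simpa using hyz))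
      (isMatchingIn_mono H.Mmatch Finset.sdiff_subset)
    intro g hg g' hg' v hv hv'
    rw [Finset.mem_singleton] at hg
    subst hg
    apply hout g' hg' v hv'
    rcases Sym2.mem_iff.1 hv with rfl | rfl
    · exact hy6
    · exact hz6
  · have hc3 : ({s(a, b), s(c, d), s(e, f)} : Finset (Sym2 (Fin n))).card = 3 :=
      Finset.card_eq_three.2 ⟨_, _, _, h12, h13, h23, rfl⟩
    rw [Finset.card_union_of_disjoint (Finset.disjoint_singleton_left.2 hyznot),
      Finset.card_singleton, Finset.card_sdiff_of_subset, H.Mcard, hc3]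
    · have := Finset.card_le_card (s := {s(a, b), s(c, d), s(e, f)}) (t := M) (by
        intro g hg
        simp only [Finset.mem_insert, Finset.mem_singleton] at hg
        rcases hg with rfl | rfl | rfl <;> assumption)
      rw [hc3, H.Mcard] at this
      omega
    · intro g hg
      simp only [Finset.mem_insert, Finset.mem_singleton] at hg
      rcases hg with rfl | rfl | rfl <;> assumption
  · intro g hg v hv
    rw [Finset.mem_sdiff]
    rcases Finset.mem_union.1 hg with hg | hg
    · rw [Finset.mem_singleton] at hg
      subst hg
      rcases Sym2.mem_iff.1 hv with rfl | rfl
      · exact ⟨h6S _ hy6, hy⟩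
      · exact ⟨h6S _ hz6, hz⟩
    · exact ⟨H.MS g (Finset.mem_sdiff.1 hg).1 v hv, fun hq => hout g hg v hv (hQ6 v hq)⟩
  · intro g hg
    rcases Finset.mem_union.1 hg with hg | hg
    · rw [Finset.mem_singleton] at hg
      subst hg
      exact hcol
    · obtain ⟨x, hx⟩ := H.Mcol g (Finset.mem_sdiff.1 hg).1
      exact ⟨x, hh _ hx⟩
  · intro i
    apply isMatchingIn_union (isMatchingIn_singleton (hE1 i)) (H.Nmatch i)
    intro g hg g' hg'
    rw [Finset.mem_singleton] at hg
    subst hg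
    exact hEN i g' hg'
  · intro i
    rw [Finset.card_union_of_disjoint, Finset.card_singleton, H.Ncard, add_comm]
    rw [Finset.disjoint_singleton_left]
    intro hmem
    have := hEN i (E i) hmem
    generalize E i = g at this
    induction g using Sym2.ind with
    | _ u w => exact this u (by simp) (by simp)
  · intro i g hg
    rcases Finset.mem_union.1 hg with hg | hg
    · rw [Finset.mem_singleton] at hg
      subst hg
      exact hE2 i
    · exact hh _ (H.Ncol i g hg)
  · intro i g hg v hv
    rw [Finset.mem_sdiff]
    rcases Finset.mem_union.1 hg with hg | hg
    · rw [Finset.mem_singleton] at hg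
      subst hg
      exact fun hq => hq.2 (hE3 i v hv)
    · exact fun hq => H.NS i g hg v hv hq.1
  · intro p hp hpS
    have hpS1 : ∀ v ∈ p.1, v ∈ S := fun v hv => (Finset.mem_sdiff.1 (hpS v hv)).1
    have hpS2 : ∀ v ∈ p.1, v ∉ Q := fun v hv => (Finset.mem_sdiff.1 (hpS v hv)).2
    rw [Finset.mem_union, Finset.mem_singleton]
    rcases hnew p hp with hp | hp | ⟨v, hv, hvQ⟩
    · have hM := H.fresh p hp hpS1
      by_cases hx : p.1 ∈ ({s(a, b), s(c, d), s(e, f)} : Finset (Sym2 (Fin n)))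
      · left
        simp only [Finset.mem_insert, Finset.mem_singleton] at hx
        rcases hx with hx | hx | hx <;> rw [hx] at hM hpS2 ⊢ <;>
          refine hthree _ _ hM (by simp) (by simp) (hpS2 _ (by simp)) (hpS2 _ (by simp))
      · right
        exact Finset.mem_sdiff.2 ⟨hM, hx⟩
    · exact Or.inl hp
    · exact absurd hvQ (hpS2 v hv)

lemma BInv.new_edge {n : ℕ} {h : GameHistory n 3} {q m : ℕ} {S : Finset (Fin n)}
    {M : Finset (Sym2 (Fin n))} {N : Fin 3 → Finset (Sym2 (Fin n))} (H : BInv n h q m S M N)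
    {u u' w w' : Fin n} (h1 : s(u, u') ∈ M) (h2 : s(w, w') ∈ M) (hne : s(u, u') ≠ s(w, w')) :
    ∀ p ∈ h, p.1 ≠ s(u, w) := by
  intro p hp hpe
  have hM : s(u, w) ∈ M := by
    rw [← hpe]
    apply H.fresh p hp
    rw [hpe]
    intro v hv
    rcases Sym2.mem_iff.1 hv with rfl | rfl
    · exact H.MS _ h1 _ (by simp)
    · exact H.MS _ h2 _ (by simp)
  by_cases hx : s(u, w) = s(u, u')
  · have hw : w ∈ s(u, u') := by rw [← hx]; simp
    exact H.Mmatch.2 h1 h2 hne w hw (by simp)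
  · exact H.Mmatch.2 hM h1 hx u (by simp) (by simp)

lemma IsMatchingIn.ne4 {n : ℕ} {M : Finset (Sym2 (Fin n))} (hM : IsMatchingIn M)
    {a b c d : Fin n} (h1 : s(a, b) ∈ M) (h2 : s(c, d) ∈ M) (hne : s(a, b) ≠ s(c, d)) :
    a ≠ c ∧ a ≠ d ∧ b ≠ c ∧ b ≠ d := by
  have k1 := hM.2 h1 h2 hne a (by simp)
  have k2 := hM.2 h1 h2 hne b (by simp)
  simp only [Sym2.mem_iff, not_or] at k1 k2
  exact ⟨k1.1, k1.2, k2.1, k2.2⟩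

/-- Builder's second and third move of a round, when the first one copied the colour `i`. -/
lemma round_second {n r : ℕ} {h : GameHistory n 3} {q m K : ℕ} {S : Finset (Fin n)}
    {M : Finset (Sym2 (Fin n))} {N : Fin 3 → Finset (Sym2 (Fin n))}
    (H : BInv n h q (m + 2) S M N)
    {a b c d e f : Fin n} {i j k : Fin 3}
    (h1 : s(a, b) ∈ M) (h2 : s(c, d) ∈ M) (h3 : s(e, f) ∈ M)
    (h12 : s(a, b) ≠ s(c, d)) (h13 : s(a, b) ≠ s(e, f)) (h23 : s(c, d) ≠ s(e, f))
    (c1 : (s(a, b), i) ∈ h) (c2 : (s(c, d), j) ∈ h) (c3 : (s(e, f), k) ∈ h)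
    (huniv : ∀ x : Fin 3, x = i ∨ x = j ∨ x = k)
    (w2 : ∀ h', h'.length = h.length + 2 → (∃ S' M' N', BInv n h' (q + 1) m S' M' N') →
      WinsFrom n r (K + 1) h')
    (w3 : ∀ h', h'.length = h.length + 3 → (∃ S' M' N', BInv n h' (q + 1) m S' M' N') →
      WinsFrom n r K h') :
    WinsFrom n r (K + 2) (h ++ [(s(b, c), i)]) := by
  classical
  obtain ⟨hac, had, hbc, hbd⟩ := H.Mmatch.ne4 h1 h2 h12
  obtain ⟨hae, haf, hbe, hbf⟩ := H.Mmatch.ne4 h1 h3 h13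
  obtain ⟨hce, hcf, hde, hdf⟩ := H.Mmatch.ne4 h2 h3 h23
  have hab : a ≠ b := fun hx => H.Mmatch.1 _ h1 (by simpa using hx)
  have hcd : c ≠ d := fun hx => H.Mmatch.1 _ h2 (by simpa using hx)
  have hef : e ≠ f := fun hx => H.Mmatch.1 _ h3 (by simpa using hx)
  have n1 := H.new_edge h2 h3 h23
  have h1' : s(b, a) ∈ M := by rwa [Sym2.eq_swap]
  have h2' : s(d, c) ∈ M := by rwa [Sym2.eq_swap]
  have h3' : s(f, e) ∈ M := by rwa [Sym2.eq_swap]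
  have n2 := H.new_edge h1 h2' (by rwa [Sym2.eq_swap (a := d)])
  have n3 := H.new_edge h1 h3' (by rwa [Sym2.eq_swap (a := f)])
  refine ⟨s(c, e), by simpa using hce, ?_, ?_⟩
  · intro hmem
    rw [List.mem_map] at hmem
    obtain ⟨p, hp, hpe⟩ := hmem
    rcases List.mem_append.1 hp with hp | hp
    · exact n1 p hp hpe
    · rw [List.mem_singleton] at hp
      subst hp
      simp only [Sym2.eq_iff] at hpe
      tauto
  · intro x
    rcases huniv x with rfl | rfl | rfl
    · apply w2 _ (by simp)
      refine H.reduce (a := a) (b := b) (c := c) (d := d) (e := e) (f := f) (y := a) (z := b)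
        (Q := {c, d, e, f}) (fun p hp => by simp [hp]) h1 h2 h3 h12 h13 h23 hab
        (by simp <;> tauto) (by simp <;> tauto) (by simp) (by simp) (by simp <;> tauto)
        (by simp <;> tauto) ⟨x, by simp [c1]⟩ ?_ ?_
      · intro t
        rcases huniv t with rfl | rfl | rfl
        · exact ⟨s(c, e), by simpa using hce, by simp, by simp⟩
        · exact ⟨s(c, d), by simpa using hcd, by simp [c2], by simp⟩
        · exact ⟨s(e, f), by simpa using hef, by simp [c3], by simp⟩
      · intro p hp
        simp only [List.mem_append, List.mem_singleton] at hp
        rcases hp with (hp | rfl) | rfl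
        · exact Or.inl hp
        · exact Or.inr (Or.inr ⟨c, by simp, by simp⟩)
        · exact Or.inr (Or.inr ⟨c, by simp, by simp⟩)
    · refine ⟨s(a, d), by simpa using had, ?_, ?_⟩
      · intro hmem
        rw [List.mem_map] at hmem
        obtain ⟨p, hp, hpe⟩ := hmem
        simp only [List.mem_append, List.mem_singleton] at hp
        rcases hp with (hp | rfl) | rfl
        · exact n2 p hp hpe
        · simp only [Sym2.eq_iff] at hpe
          tauto
        · simp only [Sym2.eq_iff] at hpe
          tauto
      · intro x'
        apply w3 _ (by simp)
        refine H.reduce (a := a) (b := b) (c := c) (d := d) (e := e) (f := f) (y := a) (z := d)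
          (Q := {b, c, e, f}) (fun p hp => by simp [hp]) h1 h2 h3 h12 h13 h23 had
          (by simp <;> tauto) (by simp <;> tauto) (by simp) (by simp) (by simp)
          (by simp <;> tauto) ⟨x', by simp⟩ ?_ ?_
        · intro t
          rcases huniv t with rfl | rfl | rfl
          · exact ⟨s(b, c), by simpa using hbc, by simp, by simp⟩
          · exact ⟨s(c, e), by simpa using hce, by simp, by simp⟩
          · exact ⟨s(e, f), by simpa using hef, by simp [c3], by simp⟩
        · intro p hp
          simp only [List.mem_append, List.mem_singleton] at hp
          rcases hp with ((hp | rfl) | rfl) | rfl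
          · exact Or.inl hp
          · exact Or.inr (Or.inr ⟨c, by simp, by simp⟩)
          · exact Or.inr (Or.inr ⟨c, by simp, by simp⟩)
          · exact Or.inr (Or.inl rfl)
    · refine ⟨s(a, f), by simpa using haf, ?_, ?_⟩
      · intro hmem
        rw [List.mem_map] at hmem
        obtain ⟨p, hp, hpe⟩ := hmem
        simp only [List.mem_append, List.mem_singleton] at hp
        rcases hp with (hp | rfl) | rfl
        · exact n3 p hp hpe
        · simp only [Sym2.eq_iff] at hpe
          tauto
        · simp only [Sym2.eq_iff] at hpe
          tauto
      · intro x'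
        apply w3 _ (by simp)
        refine H.reduce (a := a) (b := b) (c := c) (d := d) (e := e) (f := f) (y := a) (z := f)
          (Q := {b, c, d, e}) (fun p hp => by simp [hp]) h1 h2 h3 h12 h13 h23 haf
          (by simp <;> tauto) (by simp <;> tauto) (by simp) (by simp) (by simp)
          (by simp <;> tauto) ⟨x', by simp⟩ ?_ ?_
        · intro t
          rcases huniv t with rfl | rfl | rfl
          · exact ⟨s(b, c), by simpa using hbc, by simp, by simp⟩
          · exact ⟨s(c, d), by simpa using hcd, by simp [c2], by simp⟩
          · exact ⟨s(c, e), by simpa using hce, by simp, by simp⟩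
        · intro p hp
          simp only [List.mem_append, List.mem_singleton] at hp
          rcases hp with ((hp | rfl) | rfl) | rfl
          · exact Or.inl hp
          · exact Or.inr (Or.inr ⟨c, by simp, by simp⟩)
          · exact Or.inr (Or.inr ⟨c, by simp, by simp⟩)
          · exact Or.inr (Or.inl rfl)

/-- A full round: at most three moves remove four vertices. -/
lemma round_first {n r : ℕ} {h : GameHistory n 3} {q m K : ℕ} {S : Finset (Fin n)}
    {M : Finset (Sym2 (Fin n))} {N : Fin 3 → Finset (Sym2 (Fin n))}
    (H : BInv n h q (m + 2) S M N)
    {a b c d e f : Fin n} {i j k : Fin 3}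
    (h1 : s(a, b) ∈ M) (h2 : s(c, d) ∈ M) (h3 : s(e, f) ∈ M)
    (h12 : s(a, b) ≠ s(c, d)) (h13 : s(a, b) ≠ s(e, f)) (h23 : s(c, d) ≠ s(e, f))
    (c1 : (s(a, b), i) ∈ h) (c2 : (s(c, d), j) ∈ h) (c3 : (s(e, f), k) ∈ h)
    (huniv : ∀ x : Fin 3, x = i ∨ x = j ∨ x = k)
    (w1 : ∀ h', h'.length = h.length + 1 → (∃ S' M' N', BInv n h' (q + 1) m S' M' N') →
      WinsFrom n r (K + 2) h')
    (w2 : ∀ h', h'.length = h.length + 2 → (∃ S' M' N', BInv n h' (q + 1) m S' M' N') →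
      WinsFrom n r (K + 1) h')
    (w3 : ∀ h', h'.length = h.length + 3 → (∃ S' M' N', BInv n h' (q + 1) m S' M' N') →
      WinsFrom n r K h') :
    WinsFrom n r (K + 3) h := by
  classical
  obtain ⟨hac, had, hbc, hbd⟩ := H.Mmatch.ne4 h1 h2 h12
  obtain ⟨hae, haf, hbe, hbf⟩ := H.Mmatch.ne4 h1 h3 h13
  obtain ⟨hce, hcf, hde, hdf⟩ := H.Mmatch.ne4 h2 h3 h23
  have hab : a ≠ b := fun hx => H.Mmatch.1 _ h1 (by simpa using hx)
  have hcd : c ≠ d := fun hx => H.Mmatch.1 _ h2 (by simpa using hx)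
  have hef : e ≠ f := fun hx => H.Mmatch.1 _ h3 (by simpa using hx)
  have h1' : s(b, a) ∈ M := by rwa [Sym2.eq_swap]
  have h2' : s(d, c) ∈ M := by rwa [Sym2.eq_swap]
  have n1 := H.new_edge h1' h2 (by rwa [Sym2.eq_swap])
  refine ⟨s(b, c), by simpa using hbc, ?_, ?_⟩
  · intro hmem
    rw [List.mem_map] at hmem
    obtain ⟨p, hp, hpe⟩ := hmem
    exact n1 p hp hpe
  · intro x
    rcases huniv x with rfl | rfl | rfl
    · exact round_second H h1 h2 h3 h12 h13 h23 c1 c2 c3 huniv w2 w3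
    · rw [Sym2.eq_swap (a := b)]
      exact round_second H (a := d) (b := c) (c := b) (d := a) (e := e) (f := f) (j := i) (k := k)
        h2' h1' h3
        (by rw [Sym2.eq_swap, Sym2.eq_swap (a := b)]; exact h12.symm)
        (by rw [Sym2.eq_swap]; exact h23) (by rw [Sym2.eq_swap]; exact h13)
        (by rw [Sym2.eq_swap]; exact c2) (by rw [Sym2.eq_swap]; exact c1) c3
        (fun t => by have := huniv t; tauto) w2 w3
    · apply w1 _ (by simp)
      refine H.reduce (a := a) (b := b) (c := c) (d := d) (e := e) (f := f) (y := e) (z := f)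
        (Q := {a, b, c, d}) (fun p hp => by simp [hp]) h1 h2 h3 h12 h13 h23 hef
        (by simp <;> tauto) (by simp <;> tauto) (by simp) (by simp) (by simp <;> tauto)
        (by simp <;> tauto) ⟨x, by simp [c3]⟩ ?_ ?_
      · intro t
        rcases huniv t with rfl | rfl | rfl
        · exact ⟨s(a, b), by simpa using hab, by simp [c1], by simp⟩
        · exact ⟨s(c, d), by simpa using hcd, by simp [c2], by simp⟩
        · exact ⟨s(b, c), by simpa using hbc, by simp, by simp⟩
      · intro p hp
        simp only [List.mem_append, List.mem_singleton] at hp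
        rcases hp with hp | rfl
        · exact Or.inl hp
        · exact Or.inr (Or.inr ⟨c, by simp, by simp⟩)

lemma phase_two {n r : ℕ} : ∀ (m q k : ℕ) (h : GameHistory n 3), q + m + 1 = r → 3 * m ≤ k →
    h.length + k ≤ n.choose 2 → (∃ S M N, BInv n h q (2 * m + 1) S M N) →
    WinsFrom n r k h := by
  classical
  intro m
  induction m with
  | zero =>
    intro q k h hq hk hl ⟨S, M, N, H⟩
    apply winsFrom_of_hasMatching k h _ hl
    have : M.Nonempty := Finset.card_pos.1 (by rw [H.Mcard]; omega)
    obtain ⟨e, he⟩ := this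
    obtain ⟨i, hi⟩ := H.Mcol e he
    refine H.win i {e} (by simpa using he) (by simpa using hi) ?_
    simp
    omega
  | succ m ih =>
    intro q k h hq hk hl ⟨S, M, N, H⟩
    have hcol : ∀ e : Sym2 (Fin n), ∃ c : Fin 3, e ∈ M → (e, c) ∈ h := by
      intro e
      by_cases he : e ∈ M
      · obtain ⟨c, hc⟩ := H.Mcol e he
        exact ⟨c, fun _ => hc⟩
      · exact ⟨0, fun hx => absurd hx he⟩
    choose col hcol using hcol
    by_cases hwin : ∃ i : Fin 3, m + 2 ≤ (M.filter (fun e => col e = i)).card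
    · obtain ⟨i, hi⟩ := hwin
      apply winsFrom_of_hasMatching k h _ hl
      refine H.win i (M.filter (fun e => col e = i)) (Finset.filter_subset _ _) ?_ ?_
      · intro e he
        rw [Finset.mem_filter] at he
        rw [← he.2]
        exact hcol e he.1
      · omega
    · push Not at hwin
      have hsum : M.card = ∑ i : Fin 3, (M.filter (fun e => col e = i)).card :=
        Finset.card_eq_sum_card_fiberwise (fun _ _ => by simp)
      rw [H.Mcard, Fin.sum_univ_three] at hsum
      have w0 := hwin 0
      have w1 := hwin 1
      have w2 := hwin 2
      obtain ⟨g0, hg0⟩ : (M.filter (fun e => col e = 0)).Nonempty :=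
        Finset.card_pos.1 (by omega)
      obtain ⟨g1, hg1⟩ : (M.filter (fun e => col e = 1)).Nonempty :=
        Finset.card_pos.1 (by omega)
      obtain ⟨g2, hg2⟩ : (M.filter (fun e => col e = 2)).Nonempty :=
        Finset.card_pos.1 (by omega)
      rw [Finset.mem_filter] at hg0 hg1 hg2
      have k0 := hcol g0 hg0.1
      have k1 := hcol g1 hg1.1
      have k2 := hcol g2 hg2.1
      rw [hg0.2] at k0
      rw [hg1.2] at k1
      rw [hg2.2] at k2
      have d01 : g0 ≠ g1 := by
        intro hx; rw [hx, hg1.2] at hg0; exact absurd hg0.2 (by decide)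
      have d02 : g0 ≠ g2 := by
        intro hx; rw [hx, hg2.2] at hg0; exact absurd hg0.2 (by decide)
      have d12 : g1 ≠ g2 := by
        intro hx; rw [hx, hg2.2] at hg1; exact absurd hg1.2 (by decide)
      obtain ⟨K, rfl⟩ : ∃ K, k = K + 3 := ⟨k - 3, by omega⟩
      induction g0 using Sym2.ind with
      | _ a b =>
      induction g1 using Sym2.ind with
      | _ c d =>
      induction g2 using Sym2.ind with
      | _ e f =>
      have H' : BInv n h q ((2 * m + 1) + 2) S M N := H
      refine round_first H' hg0.1 hg1.1 hg2.1 d01 d02 d12 k0 k1 k2 (by decide) ?_ ?_ ?_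
      · intro h' hl' hB
        exact ih (q + 1) _ h' (by omega) (by omega) (by omega) hB
      · intro h' hl' hB
        exact ih (q + 1) _ h' (by omega) (by omega) (by omega) hB
      · intro h' hl' hB
        exact ih (q + 1) _ h' (by omega) (by omega) (by omega) hB

lemma phase_one {n m : ℕ} (hn : 2 * (2 * m + 1) ≤ n) : ∀ (t j k : ℕ) (h : GameHistory n 3),
    j + t = 2 * m + 1 → t + 3 * m ≤ k → h.length + k ≤ n.choose 2 →
    (∃ M, BInv n h 0 j univ M (fun _ => ∅)) → WinsFrom n (m + 1) k h := by
  classical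
  intro t
  induction t with
  | zero =>
    intro j k h hj hk hl ⟨M, H⟩
    have hj' : j = 2 * m + 1 := by omega
    subst hj'
    exact phase_two m 0 k h (by omega) (by omega) hl ⟨_, _, _, H⟩
  | succ t ih =>
    intro j k h hj hk hl ⟨M, H⟩
    obtain ⟨K, rfl⟩ : ∃ K, k = K + 1 := ⟨k - 1, by omega⟩
    have hcov : (M.biUnion Sym2.toFinset).card ≤ M.card * 2 := by
      apply Finset.card_biUnion_le_card_mul
      intro e he
      exact (Sym2.card_toFinset_of_not_isDiag e (H.Mmatch.1 e he)).le
    have hfree : 1 < (M.biUnion Sym2.toFinset)ᶜ.card := by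
      rw [Finset.card_compl, Fintype.card_fin]
      rw [H.Mcard] at hcov
      omega
    obtain ⟨u, hu, w, hw, huw⟩ := Finset.one_lt_card.1 hfree
    simp only [Finset.mem_compl, Finset.mem_biUnion, Sym2.mem_toFinset, not_exists, not_and]
      at hu hw
    have hnot : s(u, w) ∉ M := fun hx => hu _ hx (by simp)
    refine ⟨s(u, w), by simpa using huw, ?_, ?_⟩
    · intro hmem
      rw [List.mem_map] at hmem
      obtain ⟨p, hp, hpe⟩ := hmem
      apply hnot
      rw [← hpe]
      exact H.fresh p hp (by simp)
    · intro c
      refine ih (j + 1) K _ (by omega) (by omega) (by simp; omega) ⟨{s(u, w)} ∪ M, ?_⟩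
      refine ⟨?_, ?_, by simp, ?_, H.Nmatch, H.Ncard, by simp, by simp, ?_⟩
      · apply isMatchingIn_union (isMatchingIn_singleton (by simpa using huw)) H.Mmatch
        intro g hg g' hg' v hv hv'
        rw [Finset.mem_singleton] at hg
        subst hg
        rcases Sym2.mem_iff.1 hv with rfl | rfl
        · exact hu _ hg' hv'
        · exact hw _ hg' hv'
      · rw [Finset.card_union_of_disjoint (Finset.disjoint_singleton_left.2 hnot),
          Finset.card_singleton, H.Mcard, add_comm]
      · intro g hg
        rcases Finset.mem_union.1 hg with hg | hg
        · rw [Finset.mem_singleton] at hg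
          subst hg
          exact ⟨c, by simp⟩
        · obtain ⟨x, hx⟩ := H.Mcol g hg
          exact ⟨x, by simp [hx]⟩
      · intro p hp _
        rw [Finset.mem_union, Finset.mem_singleton]
        rcases List.mem_append.1 hp with hp | hp
        · exact Or.inr (H.fresh p hp (by simp))
        · rw [List.mem_singleton] at hp
          subst hp
          exact Or.inl rfl

lemma upper_bound {r : ℕ} (hr : 1 ≤ r) :
    BuilderWinsIn (4 * r - 2) 3 (fun _ => r) (5 * r - 4) := by
  obtain ⟨m, rfl⟩ : ∃ m, r = m + 1 := ⟨r - 1, by omega⟩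
  apply winsIn_of_winsFrom (by omega)
  refine phase_one (by omega) (2 * m + 1) 0 _ [] (by omega) (by omega) ?_ ⟨∅, ?_⟩
  · have h1 : 4 * (m + 1) - 2 = 2 * (2 * m + 1) := by omega
    rw [h1, Nat.choose_two_right, Nat.mul_assoc, Nat.mul_div_cancel_left _ (by omega)]
    have h2 : 2 * (2 * m + 1) - 1 = 4 * m + 1 := by omega
    have h3 : 5 * (m + 1) - 4 = 5 * m + 1 := by omega
    rw [h2, h3]
    simp
    nlinarith
  · refine ⟨?_, ?_, ?_, ?_, ?_, ?_, ?_, ?_, ?_⟩ <;> simp [IsMatchingIn]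

/-- For `r ≥ 1` and `n₃ = 4r − 2 = R₃(rK₂)`, we have `R̃₃(rK₂; n₃) = 5r − 4`. -/
theorem restrictedOnlineRamsey_three_colours (r : ℕ) (hr : 1 ≤ r) :
    restrictedOnlineRamsey (4 * r - 2) 3 (fun _ => r) = 5 * r - 4 := by
  unfold restrictedOnlineRamsey
  apply le_antisymm
  · exact Nat.sInf_le (upper_bound hr)
  · exact le_csInf ⟨_, upper_bound hr⟩ (fun k hk => lower_bound hr hk)
end

section
/- Fix an integer r ≥ 1 and let n_4 = 5r − 3 (which equals R_4(rK_2)). Then 7r − 6 ≤ R̃_4(rK_2; n_4) ≤ 7r − 5. Equivalently: (1) Builder has a strategy that, playing on K_{5r−3} with 4 colors, guarantees within 7r − 5 moves that some color class contains r pairwise disjoint edges, against every Painter strategy; and (2) Painter has a strategy such that for every way Builder adaptively selects 7r − 7 distinct edges of K_{5r−3}, after these moves no color class contains r pairwise disjoint edges. -/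
open Finset

/-! ### Lower bound: Painter's strategy -/

/-- Painter's bookkeeping units: an assigned vertex or a pending edge, with a colour. -/
inductive PUnitG (n : ℕ) where
  | asg (v : Fin n) (i : Fin 4) : PUnitG n
  | pend (u v : Fin n) (i : Fin 4) : PUnitG n

namespace PUnitG
variable {n : ℕ}

def verts : PUnitG n → List (Fin n)
  | asg v _ => [v]
  | pend u v _ => [u, v]

def col : PUnitG n → Fin 4
  | asg _ i => i
  | pend _ _ i => i

def cost : PUnitG n → ℕ
  | asg _ _ => 2
  | pend _ _ _ => 1

def covers (e : Sym2 (Fin n)) (i : Fin 4) : PUnitG n → Prop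
  | asg v j => v ∈ e ∧ j = i
  | pend u v j => e = s(u, v) ∧ j = i

theorem col_asg (v : Fin n) (i : Fin 4) : (asg v i).col = i := rfl

theorem col_pend (u v : Fin n) (i : Fin 4) : (pend u v i).col = i := rfl

end PUnitG

theorem exists_perm_cons_of_mem {α : Type*} {a : α} {L : List α} (h : a ∈ L) :
    ∃ L', L.Perm (a :: L') := by
  obtain ⟨s, t, rfl⟩ := List.append_of_mem h
  exact ⟨s ++ t, List.perm_middle⟩

/-- Painter's invariant. -/
structure PInv_s3 {n : ℕ} (s : ℕ) (h : GameHistory n 4) (U : List (PUnitG n)) : Prop where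
  nodup : (U.flatMap PUnitG.verts).Nodup
  cov : ∀ e i, (e, i) ∈ h → i ≠ 3 → ∃ g ∈ U, g.covers e i
  cnt : ∀ i, i ≠ 3 → U.countP (fun g => g.col = i) ≤ s
  cost : (U.map PUnitG.cost).sum + h.countP (fun p => p.2 = 3) ≤ h.length
  last : ∀ e, (e, (3 : Fin 4)) ∈ h → (∀ i, i ≠ 3 → U.countP (fun g => g.col = i) = s) ∧
    ∀ v ∈ e, v ∉ U.flatMap PUnitG.verts
  ne3 : ∀ g ∈ U, g.col ≠ 3

theorem PInv_s3.perm {n s : ℕ} {h : GameHistory n 4} {U U' : List (PUnitG n)} (H : PInv_s3 s h U)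
    (p : U.Perm U') : PInv_s3 s h U' where
  nodup := (p.flatMap_right _).nodup_iff.1 H.nodup
  cov e i he hi := by
    obtain ⟨g, hg, hc⟩ := H.cov e i he hi
    exact ⟨g, p.mem_iff.1 hg, hc⟩
  cnt i hi := by rw [← p.countP_eq]; exact H.cnt i hi
  cost := by rw [← (p.map _).sum_eq]; exact H.cost
  last e he := by
    obtain ⟨h1, h2⟩ := H.last e he
    refine ⟨fun i hi => by rw [← p.countP_eq]; exact h1 i hi, fun v hv hm => h2 v hv ?_⟩
    exact (p.flatMap_right _).mem_iff.2 hm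
  ne3 g hg := H.ne3 g (p.mem_iff.2 hg)

theorem PInv_s3.resolve {n s : ℕ} {h : GameHistory n 4} {U : List (PUnitG n)} {u v w : Fin n}
    {i : Fin 4} (H : PInv_s3 s h (PUnitG.pend u v i :: U)) (hw : w = u ∨ w = v)
    (e : Sym2 (Fin n)) (he : w ∈ e) : PInv_s3 s (h ++ [(e, i)]) (PUnitG.asg w i :: U) := by
  have hi : i ≠ 3 := H.ne3 (PUnitG.pend u v i) (by simp)
  have hnd := H.nodup
  have hcost := H.cost
  simp [PUnitG.verts] at hnd
  refine ⟨?_, ?_, ?_, ?_, ?_, ?_⟩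
  · simp [PUnitG.verts]
    rcases hw with rfl | rfl
    · exact ⟨hnd.1.2, hnd.2.2⟩
    · exact ⟨hnd.2.1, hnd.2.2⟩
  · intro e' j hm hj
    rw [List.mem_append] at hm
    rcases hm with hm | hm
    · obtain ⟨g, hg, hc⟩ := H.cov e' j hm hj
      rcases List.mem_cons.1 hg with rfl | hg
      · refine ⟨PUnitG.asg w i, by simp, ?_, hc.2⟩
        rw [hc.1]
        rcases hw with rfl | rfl <;> simp
      · exact ⟨g, by simp [hg], hc⟩
    · simp at hm
      obtain ⟨rfl, rfl⟩ := hm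
      exact ⟨PUnitG.asg w j, by simp, he, rfl⟩
  · intro j hj
    have := H.cnt j hj
    simp only [List.countP_cons, PUnitG.col_asg, PUnitG.col_pend] at this ⊢
    exact this
  · simp [PUnitG.cost, List.countP_append, hi] at hcost ⊢
    omega
  · intro e' hm
    rw [List.mem_append] at hm
    rcases hm with hm | hm
    · obtain ⟨h1, h2⟩ := H.last e' hm
      refine ⟨fun j hj => ?_, fun z hz hz' => h2 z hz ?_⟩
      · have := h1 j hj
        simp only [List.countP_cons, PUnitG.col_asg, PUnitG.col_pend] at this ⊢
        exact this
      · simp [PUnitG.verts] at hz' ⊢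
        rcases hz' with rfl | hz'
        · rcases hw with rfl | rfl <;> simp
        · exact Or.inr (Or.inr hz')
    · simp at hm
      exact absurd hm.2.symm hi
  · intro g hg
    rcases List.mem_cons.1 hg with rfl | hg
    · exact hi
    · exact H.ne3 g (by simp [hg])

theorem PInv_s3.step {n s : ℕ} {h : GameHistory n 4} {U : List (PUnitG n)} (H : PInv_s3 s h U)
    (e : Sym2 (Fin n)) (he : ¬ e.IsDiag) : ∃ c, ∃ U', PInv_s3 s (h ++ [(e, c)]) U' := by
  by_cases h1 : ∃ v i, PUnitG.asg v i ∈ U ∧ v ∈ e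
  · obtain ⟨v, i, hU, hv⟩ := h1
    have hi : i ≠ 3 := H.ne3 _ hU
    refine ⟨i, U, H.nodup, ?_, H.cnt, ?_, ?_, H.ne3⟩
    · intro e' j hm hj
      rw [List.mem_append] at hm
      rcases hm with hm | hm
      · exact H.cov e' j hm hj
      · simp at hm
        obtain ⟨rfl, rfl⟩ := hm
        exact ⟨_, hU, hv, rfl⟩
    · have := H.cost
      simp [List.countP_append, hi]
      omega
    · intro e' hm
      rw [List.mem_append] at hm
      rcases hm with hm | hm
      · exact H.last e' hm
      · simp at hm
        exact absurd hm.2.symm hi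
  by_cases h2 : ∃ u v i, PUnitG.pend u v i ∈ U ∧ (u ∈ e ∨ v ∈ e)
  · obtain ⟨u, v, i, hU, hv⟩ := h2
    obtain ⟨U', hp⟩ := exists_perm_cons_of_mem hU
    have H' := H.perm hp
    rcases hv with hv | hv
    · exact ⟨i, _, H'.resolve (Or.inl rfl) e hv⟩
    · exact ⟨i, _, H'.resolve (Or.inr rfl) e hv⟩
  have hfree : ∀ v ∈ e, v ∉ U.flatMap PUnitG.verts := by
    intro v hv hm
    rw [List.mem_flatMap] at hm
    obtain ⟨g, hg, hvg⟩ := hm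
    cases g with
    | asg w i =>
      simp [PUnitG.verts] at hvg
      subst hvg
      exact h1 ⟨v, i, hg, hv⟩
    | pend a b i =>
      simp [PUnitG.verts] at hvg
      rcases hvg with rfl | rfl
      · exact h2 ⟨_, _, _, hg, Or.inl hv⟩
      · exact h2 ⟨_, _, _, hg, Or.inr hv⟩
  by_cases h3 : ∃ i, i ≠ 3 ∧ U.countP (fun g => g.col = i) < s
  · obtain ⟨i, hi, hlt⟩ := h3
    induction e using Sym2.inductionOn with
    | hf x y =>
    have hxy : x ≠ y := by simpa using he
    have hx := hfree x (by simp)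
    have hy := hfree y (by simp)
    refine ⟨i, PUnitG.pend x y i :: U, ?_, ?_, ?_, ?_, ?_, ?_⟩
    · have := H.nodup
      simp only [List.flatMap_cons, PUnitG.verts, List.cons_append, List.nil_append,
        List.nodup_cons, List.mem_cons, not_or]
      exact ⟨⟨hxy, hx⟩, hy, this⟩
    · intro e' j hm hj
      rw [List.mem_append] at hm
      rcases hm with hm | hm
      · obtain ⟨g, hg, hc⟩ := H.cov e' j hm hj
        exact ⟨g, by simp [hg], hc⟩
      · simp at hm
        obtain ⟨rfl, rfl⟩ := hm
        exact ⟨PUnitG.pend x y j, by simp, rfl, rfl⟩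
    · intro j hj
      have := H.cnt j hj
      by_cases hij : i = j
      · subst hij
        simp only [List.countP_cons, PUnitG.col_pend]
        simp
        omega
      · simp only [List.countP_cons, PUnitG.col_pend]
        simpa [hij] using this
    · have := H.cost
      simp [PUnitG.cost, List.countP_append, hi]
      omega
    · intro e' hm
      rw [List.mem_append] at hm
      rcases hm with hm | hm
      · have := (H.last e' hm).1 i hi
        omega
      · simp at hm
        exact absurd hm.2.symm hi
    · intro g hg
      rcases List.mem_cons.1 hg with rfl | hg
      · exact hi
      · exact H.ne3 g hg
  · push Not at h3
    have hfull : ∀ i, i ≠ 3 → U.countP (fun g => g.col = i) = s := fun i hi =>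
      le_antisymm (H.cnt i hi) (h3 i hi)
    refine ⟨3, U, H.nodup, ?_, H.cnt, ?_, ?_, H.ne3⟩
    · intro e' j hm hj
      rw [List.mem_append] at hm
      rcases hm with hm | hm
      · exact H.cov e' j hm hj
      · simp at hm
        exact absurd hm.2 hj
    · have := H.cost
      simp [List.countP_append]
      omega
    · intro e' hm
      rw [List.mem_append] at hm
      rcases hm with hm | hm
      · exact H.last e' hm
      · simp at hm
        subst hm
        exact ⟨hfull, hfree⟩

theorem PInv_s3.sum_verts {n : ℕ} (U : List (PUnitG n)) :
    (U.flatMap PUnitG.verts).length + (U.map PUnitG.cost).sum = 3 * U.length := by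
  induction U with
  | nil => simp
  | cons g U ih =>
    cases g <;> simp [PUnitG.verts, PUnitG.cost] at ih ⊢ <;> omega

theorem PInv_s3.sum_cols {n : ℕ} (U : List (PUnitG n)) (h : ∀ g ∈ U, g.col ≠ 3) :
    U.length = U.countP (fun g => g.col = 0) + U.countP (fun g => g.col = 1) +
      U.countP (fun g => g.col = 2) := by
  induction U with
  | nil => simp
  | cons g U ih =>
    have ih := ih (fun g hg => h g (by simp [hg]))
    have hg := h g (by simp)
    simp only [List.countP_cons, List.length_cons]
    have : g.col = 0 ∨ g.col = 1 ∨ g.col = 2 := by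
      generalize g.col = x at hg
      revert x; decide
    rcases this with e | e | e <;> simp [e] <;> omega

theorem card_verts_matching {n : ℕ} (M : Finset (Sym2 (Fin n))) (hM : IsMatchingIn M) :
    (M.biUnion (fun e => e.toFinset)).card = 2 * M.card := by
  rw [Finset.card_biUnion]
  · rw [Finset.sum_congr rfl (fun e he => Sym2.card_toFinset_of_not_isDiag e (hM.1 e he))]
    simp [mul_comm]
  · intro e he f hf hef
    show Disjoint e.toFinset f.toFinset
    rw [Finset.disjoint_left]
    intro v hv hv'
    rw [Sym2.mem_toFinset] at hv hv'
    exact hM.2 he hf hef v hv hv'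

theorem PInv_s3.safe {n s : ℕ} (hn : n = 5 * s + 2) {h : GameHistory n 4} {U : List (PUnitG n)}
    (H : PInv_s3 s h U) (hl : h.length ≤ 7 * s) : ¬ HistoryHasMatching n 4 (fun _ => s + 1) h := by
  rintro ⟨i, M, hc, hM, hh⟩
  simp only at hc
  by_cases hi : i = 3
  · subst hi
    have hne : M.Nonempty := by rw [← Finset.card_pos]; omega
    obtain ⟨e0, he0⟩ := hne
    have hfull := (H.last e0 (hh e0 he0)).1
    have hsum := PInv_s3.sum_cols U H.ne3
    rw [hfull 0 (by decide), hfull 1 (by decide), hfull 2 (by decide)] at hsum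
    have hv := PInv_s3.sum_verts U
    have hcost := H.cost
    have hdisj : Disjoint (M.biUnion (fun e => e.toFinset))
        (U.flatMap PUnitG.verts).toFinset := by
      rw [Finset.disjoint_left]
      intro v hv hv'
      rw [Finset.mem_biUnion] at hv
      obtain ⟨e, he, hve⟩ := hv
      rw [Sym2.mem_toFinset] at hve
      exact (H.last e (hh e he)).2 v hve (List.mem_toFinset.1 hv')
    have hcard := Finset.card_le_univ (M.biUnion (fun e => e.toFinset) ∪
        (U.flatMap PUnitG.verts).toFinset)
    rw [Finset.card_union_of_disjoint hdisj, card_verts_matching M hM, hc,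
      List.toFinset_card_of_nodup H.nodup, Fintype.card_fin] at hcard
    have hc3 : s + 1 ≤ h.countP (fun p => p.2 = 3) := by
      rw [← hc, List.countP_eq_length_filter]
      have : M.image (fun e => (e, (3 : Fin 4))) ⊆ (h.filter (fun p => p.2 = 3)).toFinset := by
        intro p hp
        rw [Finset.mem_image] at hp
        obtain ⟨e, he, rfl⟩ := hp
        simp [hh e he]
      have h2 := Finset.card_le_card this
      rw [Finset.card_image_of_injective _ (fun a b hab => (Prod.mk.inj hab).1)] at h2
      exact h2.trans (List.toFinset_card_le _)
    omega
  · have hcnt := H.cnt i hi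
    rw [List.countP_eq_length_filter] at hcnt
    have key : ∀ e ∈ M, ∃ g ∈ U, g.covers e i := fun e he => H.cov e i (hh e he) hi
    have hne : M.Nonempty := by rw [← Finset.card_pos]; omega
    obtain ⟨e0, he0⟩ := hne
    have : Nonempty (PUnitG n) := ⟨(key e0 he0).choose⟩
    choose! f hf1 hf2 using key
    classical
    have : M.card ≤ (U.filter (fun g => g.col = i)).toFinset.card := by
      apply Finset.card_le_card_of_injOn f
      · intro e he
        simp
        refine ⟨hf1 e he, ?_⟩
        have := hf2 e he
        cases hg : f e <;> rw [hg] at this <;> exact this.2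
      · intro e he e' he' hee
        by_contra hne
        have a := hf2 e he
        have b := hf2 e' he'
        rw [← hee] at b
        cases hg : f e with
        | asg v j =>
          rw [hg] at a b
          exact hM.2 he he' hne v a.1 b.1
        | pend u v j =>
          rw [hg] at a b
          exact hne (a.1.trans b.1.symm)
    have h2 := List.toFinset_card_le (U.filter (fun g => g.col = i))
    omega

theorem lower_bound_s3 {n s : ℕ} (hn : n = 5 * s + 2) {k : ℕ}
    (hB : BuilderWinsIn n 4 (fun _ => s + 1) k) : 7 * s + 1 ≤ k := by
  by_contra hk
  push Not at hk
  obtain ⟨B, hval, hwin⟩ := hB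
  classical
  let P : PainterStrategy n 4 := fun h e =>
    if H : ∃ c, ∃ U, PInv_s3 s (h ++ [(e, c)]) U then H.choose else 0
  have hinv : ∀ j ≤ k, (gamePlay B P j).length = j ∧ ∃ U, PInv_s3 s (gamePlay B P j) U := by
    intro j
    induction j with
    | zero =>
      intro _
      exact ⟨rfl, [], by simp, by simp [gamePlay], by simp, by simp [gamePlay],
        by simp [gamePlay], by simp⟩
    | succ j ih =>
      intro hj
      obtain ⟨hl, U, hU⟩ := ih (by omega)
      have hd := (hval P j (by omega)).1
      have hex := hU.step (B (gamePlay B P j)) hd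
      refine ⟨by simp [gamePlay, hl], ?_⟩
      have : P (gamePlay B P j) (B (gamePlay B P j)) = hex.choose := by
        simp only [P]
        rw [dif_pos hex]
      simp only [gamePlay]
      rw [this]
      exact hex.choose_spec
  obtain ⟨hl, U, hU⟩ := hinv k le_rfl
  exact hU.safe hn (by omega) (hwin P)

/-! ### Upper bound: Builder's strategy -/

/-- Builder's gadgets: an edge, a two-coloured path on three vertices, or a five-vertex
set carrying an edge of every colour. -/
inductive Gad (n : ℕ) where
  | edge (x y : Fin n) (c : Fin 4) : Gad n
  | cherry (a u b : Fin n) (i j : Fin 4) : Gad n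
  | rain (a b c d e : Fin n) : Gad n

namespace Gad
variable {n : ℕ}

def verts : Gad n → List (Fin n)
  | edge x y _ => [x, y]
  | cherry a u b _ _ => [a, u, b]
  | rain a b c d e => [a, b, c, d, e]

def cols : Gad n → Finset (Fin 4)
  | edge _ _ c => {c}
  | cherry _ _ _ i j => {i, j}
  | rain _ _ _ _ _ => Finset.univ

def chg : Gad n → ℕ
  | edge _ _ _ => 1
  | cherry _ _ _ _ _ => 3
  | rain _ _ _ _ _ => 7

def valid (h : GameHistory n 4) : Gad n → Prop
  | edge x y c => (s(x, y), c) ∈ h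
  | cherry a u b i j => i ≠ j ∧ (s(a, u), i) ∈ h ∧ (s(u, b), j) ∈ h
  | rain a b c d e => ∀ q : Fin 4, ∃ f : Sym2 (Fin n), (f, q) ∈ h ∧ ¬ f.IsDiag ∧
      ∀ v ∈ f, v ∈ [a, b, c, d, e]

theorem valid.mono {h h' : GameHistory n 4} (hs : h ⊆ h') {g : Gad n} (H : g.valid h) :
    g.valid h' := by
  cases g with
  | edge x y c => exact hs H
  | cherry a u b i j => exact ⟨H.1, hs H.2.1, hs H.2.2⟩
  | rain a b c d e =>
    intro q
    obtain ⟨f, h1, h2⟩ := H q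
    exact ⟨f, hs h1, h2⟩

theorem exists_edge {h : GameHistory n 4} {g : Gad n} (H : g.valid h) (hn : g.verts.Nodup)
    {c : Fin 4} (hc : c ∈ g.cols) : ∃ f : Sym2 (Fin n), (f, c) ∈ h ∧ ¬ f.IsDiag ∧
      ∀ v ∈ f, v ∈ g.verts := by
  cases g with
  | edge x y i =>
    simp [cols] at hc
    subst hc
    simp [verts] at hn
    exact ⟨s(x, y), H, by simpa using hn, by simp [verts]⟩
  | cherry a u b i j =>
    simp [cols] at hc
    simp [verts] at hn
    rcases hc with rfl | rfl
    · exact ⟨s(a, u), H.2.1, by simpa using hn.1.1, by simp [verts]⟩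
    · exact ⟨s(u, b), H.2.2, by simpa using hn.2, by simp [verts]⟩
  | rain a b c d e => exact H _

end Gad

/-- The total charge of a list of gadgets. -/
def charge {n : ℕ} (L : List (Gad n)) : ℕ := (L.map Gad.chg).sum

/-- All two-coloured paths in the list use the colour `c`. -/
def Center {n : ℕ} (c : Fin 4) (L : List (Gad n)) : Prop :=
  ∀ a u b i j, Gad.cherry a u b i j ∈ L → c = i ∨ c = j

structure UInv {n : ℕ} (h : GameHistory n 4) (L : List (Gad n)) : Prop where
  valid : ∀ g ∈ L, g.valid h
  nodup : (L.flatMap Gad.verts).Nodup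

theorem UInv.perm {n : ℕ} {h : GameHistory n 4} {L L' : List (Gad n)} (H : UInv h L)
    (p : L.Perm L') : UInv h L' where
  valid g hg := H.valid g (p.mem_iff.2 hg)
  nodup := (p.flatMap_right _).nodup_iff.1 H.nodup

theorem charge_perm {n : ℕ} {L L' : List (Gad n)} (p : L.Perm L') : charge L = charge L' :=
  (p.map _).sum_eq

theorem charge_cons {n : ℕ} (g : Gad n) (L : List (Gad n)) :
    charge (g :: L) = g.chg + charge L := by simp [charge]

theorem charge_bound {n : ℕ} (L : List (Gad n)) :
    ∃ a b c, charge L = 7 * a + 3 * b + c ∧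
      (L.flatMap Gad.verts).length = 5 * a + 3 * b + 2 * c := by
  induction L with
  | nil => exact ⟨0, 0, 0, by simp [charge], by simp⟩
  | cons g L ih =>
    obtain ⟨a, b, c, h1, h2⟩ := ih
    rw [charge_cons, List.flatMap_cons, List.length_append, h1, h2]
    cases g with
    | edge x y i => exact ⟨a, b, c + 1, by simp [Gad.chg]; omega, by simp [Gad.verts]; omega⟩
    | cherry _ _ _ _ _ =>
      exact ⟨a, b + 1, c, by simp [Gad.chg]; omega, by simp [Gad.verts]; omega⟩
    | rain _ _ _ _ _ =>
      exact ⟨a + 1, b, c, by simp [Gad.chg]; omega, by simp [Gad.verts]; omega⟩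

theorem matching_of_list {n : ℕ} {h : GameHistory n 4} (c : Fin 4) (L : List (Gad n))
    (H : UInv h L) : ∃ M : Finset (Sym2 (Fin n)), M.card = L.countP (fun g => c ∈ g.cols) ∧
      IsMatchingIn M ∧ (∀ e ∈ M, (e, c) ∈ h) ∧
      ∀ e ∈ M, ∀ v ∈ e, v ∈ L.flatMap Gad.verts := by
  induction L with
  | nil => exact ⟨∅, by simp, ⟨by simp, by simp⟩, by simp, by simp⟩
  | cons g L ih =>
    have hnd := H.nodup
    rw [List.flatMap_cons, List.nodup_append] at hnd
    obtain ⟨M, h1, h2, h3, h4⟩ := ih ⟨fun g hg => H.valid g (by simp [hg]), hnd.2.1⟩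
    by_cases hc : c ∈ g.cols
    · obtain ⟨f, hf1, hf2, hf3⟩ := Gad.exists_edge (H.valid g (by simp)) hnd.1 hc
      have hdis : ∀ e ∈ M, ∀ v ∈ f, v ∉ e := fun e he v hv hv' =>
        hnd.2.2 v (hf3 v hv) v (h4 e he v hv') rfl
      have hfM : f ∉ M := by
        intro hm
        induction f using Sym2.inductionOn with
        | hf x y => exact hdis _ hm x (by simp) (by simp)
      refine ⟨insert f M, ?_, ⟨?_, ?_⟩, ?_, ?_⟩
      · rw [Finset.card_insert_of_notMem hfM, List.countP_cons, h1]
        simp [hc]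
      · intro e he
        rcases Finset.mem_insert.1 he with rfl | he
        · exact hf2
        · exact h2.1 e he
      · intro e he e' he' hne
        rw [Finset.mem_coe] at he he'
        rcases Finset.mem_insert.1 he with rfl | hem <;>
          rcases Finset.mem_insert.1 he' with rfl | hem'
        · exact absurd rfl hne
        · exact hdis e' hem'
        · exact fun v hv hv' => hdis e hem v hv' hv
        · exact h2.2 hem hem' hne
      · intro e he
        rcases Finset.mem_insert.1 he with rfl | he
        · exact hf1
        · exact h3 e he
      · intro e he v hv
        rw [List.flatMap_cons, List.mem_append]
        rcases Finset.mem_insert.1 he with rfl | he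
        · exact Or.inl (hf3 v hv)
        · exact Or.inr (h4 e he v hv)
    · refine ⟨M, ?_, h2, h3, ?_⟩
      · rw [List.countP_cons, h1]
        simp [hc]
      · intro e he v hv
        rw [List.flatMap_cons, List.mem_append]
        exact Or.inr (h4 e he v hv)

theorem weight_sum {n : ℕ} (w : Fin 4 → ℕ) (L : List (Gad n))
    (hw : ∀ g ∈ L, g.verts.length ≤ ∑ c ∈ g.cols, w c) :
    (L.flatMap Gad.verts).length ≤ ∑ c, w c * L.countP (fun g => c ∈ g.cols) := by
  induction L with
  | nil => simp
  | cons g L ih =>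
    have ih := ih (fun g hg => hw g (by simp [hg]))
    have hg := hw g (by simp)
    rw [List.flatMap_cons, List.length_append]
    have : ∑ c, w c * (g :: L).countP (fun g => c ∈ g.cols) =
        ∑ c, w c * L.countP (fun g => c ∈ g.cols) + ∑ c ∈ g.cols, w c := by
      have h2 : ∑ c ∈ g.cols, w c = ∑ c, if c ∈ g.cols then w c else 0 := by simp
      rw [h2, ← Finset.sum_add_distrib]
      refine Finset.sum_congr rfl (fun c _ => ?_)
      rw [List.countP_cons]
      by_cases hc : c ∈ g.cols <;> simp [hc, mul_add]
    omega

theorem win_of_weight {n s : ℕ} {h : GameHistory n 4} (w : Fin 4 → ℕ) (hw5 : ∑ c, w c = 5)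
    (L : List (Gad n)) (H : UInv h L) (hw : ∀ g ∈ L, g.verts.length ≤ ∑ c ∈ g.cols, w c)
    (hl : 5 * s + 1 ≤ (L.flatMap Gad.verts).length) :
    HistoryHasMatching n 4 (fun _ => s + 1) h := by
  have hs := weight_sum w L hw
  have : ∃ c, s + 1 ≤ L.countP (fun g => c ∈ g.cols) := by
    by_contra hcon
    push Not at hcon
    have : ∑ c, w c * L.countP (fun g => c ∈ g.cols) ≤ ∑ c, w c * s :=
      Finset.sum_le_sum (fun c _ => Nat.mul_le_mul_left _ (by have := hcon c; omega))
    rw [← Finset.sum_mul, hw5] at this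
    omega
  obtain ⟨c, hc⟩ := this
  obtain ⟨M, h1, h2, h3, _⟩ := matching_of_list c L H
  rw [← h1] at hc
  obtain ⟨M', hs', hc'⟩ := Finset.exists_subset_card_eq hc
  exact ⟨c, M', hc', ⟨fun e he => h2.1 e (hs' he), fun e he e' he' hne =>
    h2.2 (hs' he) (hs' he') hne⟩, fun e he => h3 e (hs' he)⟩

/-- Builder, to move with `k` moves left after history `h`, has a winning continuation. -/
def Win (n s : ℕ) : ℕ → GameHistory n 4 → Prop
  | 0, h => HistoryHasMatching n 4 (fun _ => s + 1) h
  | k + 1, h => HistoryHasMatching n 4 (fun _ => s + 1) h ∨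
      ∃ e : Sym2 (Fin n), ¬ e.IsDiag ∧ e ∉ h.map Prod.fst ∧ ∀ c, Win n s k (h ++ [(e, c)])

theorem Win.succ {n s k : ℕ} : ∀ {h : GameHistory n 4}, Win n s k h → Win n s (k + 1) h := by
  induction k with
  | zero => exact fun H => Or.inl H
  | succ k ih =>
    intro h H
    rcases H with H | ⟨e, h1, h2, h3⟩
    · exact Or.inl H
    · exact Or.inr ⟨e, h1, h2, fun c => ih (h3 c)⟩

theorem Win.query {n s k : ℕ} {h : GameHistory n 4} (e : Sym2 (Fin n)) (he : ¬ e.IsDiag)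
    (H : ∀ (h' : GameHistory n 4) c, h ⊆ h' → (e, c) ∈ h' → Win n s k h') :
    Win n s (k + 1) h := by
  by_cases hm : e ∈ h.map Prod.fst
  · rw [List.mem_map] at hm
    obtain ⟨⟨e', c⟩, hp, rfl⟩ := hm
    exact (H h c (fun _ h => h) hp).succ
  · exact Or.inr ⟨e, he, hm, fun c => H _ c (by simp) (by simp)⟩

def Good {n : ℕ} (L : List (Gad n)) : Prop :=
  (∃ c, Center c L) ∨ ∃ a u b i j d v f k l L',
    L.Perm (Gad.cherry a u b i j :: Gad.cherry d v f k l :: L') ∧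
    i ≠ k ∧ i ≠ l ∧ j ≠ k ∧ j ≠ l ∧ ∃ c, Center c L'

theorem good_pair {n : ℕ} {L : List (Gad n)} {c : Fin 4} (hc : Center c L)
    {d v f : Fin n} {k l : Fin 4} (hm : Gad.cherry d v f k l ∈ L) (a u b : Fin n) (i j : Fin 4)
    (h1 : i ≠ k) (h2 : i ≠ l) (h3 : j ≠ k) (h4 : j ≠ l) :
    Good (Gad.cherry a u b i j :: L) := by
  obtain ⟨L', hp⟩ := exists_perm_cons_of_mem hm
  refine Or.inr ⟨a, u, b, i, j, d, v, f, k, l, L', hp.cons _, h1, h2, h3, h4, c, ?_⟩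
  intro a' u' b' i' j' hm'
  exact hc a' u' b' i' j' (hp.mem_iff.2 (List.mem_cons_of_mem _ hm'))

theorem good_center {n : ℕ} {L : List (Gad n)} {c : Fin 4} (hc : Center c L)
    (a u b : Fin n) (i j : Fin 4) (h : c = i ∨ c = j) :
    Good (Gad.cherry a u b i j :: L) := by
  refine Or.inl ⟨c, ?_⟩
  intro a' u' b' i' j' hm'
  rcases List.mem_cons.1 hm' with hm' | hm'
  · cases hm'
    exact h
  · exact hc _ _ _ _ _ hm'

/-- The inductive hypothesis of the main argument. -/
def Ready (n s k : ℕ) : Prop := ∀ (h : GameHistory n 4) (L : List (Gad n)), UInv h L → Good L →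
  7 * s + 2 ≤ charge L + k → Win n s k h

theorem move_one {n s k : ℕ} (IH : Ready n s k) {h : GameHistory n 4} {L L' : List (Gad n)}
    (H : UInv h L) {x y z w : Fin n} {i j : Fin 4}
    (hp : L.Perm (Gad.edge x y i :: Gad.edge z w j :: L'))
    (hq : ∀ q, (q ≠ i ∧ ∀ a u b, Good (Gad.cherry a u b i q :: L')) ∨
      (q ≠ j ∧ ∀ a u b, Good (Gad.cherry a u b q j :: L')))
    (hk : 7 * s + 2 ≤ charge L + (k + 1)) : Win n s (k + 1) h := by
  have H' := H.perm hp
  rw [charge_perm hp, charge_cons, charge_cons] at hk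
  simp only [Gad.chg] at hk
  have hnd := H'.nodup
  simp only [List.flatMap_cons, Gad.verts, List.cons_append, List.nil_append,
        List.nodup_cons, List.mem_cons, not_or] at hnd
  have v1 := H'.valid (Gad.edge x y i) (by simp)
  have v2 := H'.valid (Gad.edge z w j) (by simp)
  refine Win.query s(y, z) (by simpa using hnd.2.1.1) ?_
  intro h' q hs hm
  rcases hq q with ⟨hqi, hg⟩ | ⟨hqj, hg⟩
  · refine IH h' _ ⟨?_, ?_⟩ (hg x y z) (by rw [charge_cons]; simp only [Gad.chg]; omega)
    · intro g hg
      rcases List.mem_cons.1 hg with rfl | hg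
      · exact ⟨hqi.symm, hs v1, hm⟩
      · exact (H'.valid g (by simp [hg])).mono hs
    · simp only [List.flatMap_cons, Gad.verts, List.cons_append, List.nil_append,
        List.nodup_cons, List.mem_cons, not_or]
      tauto
  · refine IH h' _ ⟨?_, ?_⟩ (hg y z w) (by rw [charge_cons]; simp only [Gad.chg]; omega)
    · intro g hg
      rcases List.mem_cons.1 hg with rfl | hg
      · exact ⟨hqj, hm, hs v2⟩
      · exact (H'.valid g (by simp [hg])).mono hs
    · simp only [List.flatMap_cons, Gad.verts, List.cons_append, List.nil_append,
        List.nodup_cons, List.mem_cons, not_or]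
      tauto

theorem fin4_cases : ∀ i j k l q : Fin 4, i ≠ j → i ≠ k → i ≠ l → j ≠ k → j ≠ l → k ≠ l →
    q = i ∨ q = j ∨ q = k ∨ q = l := by decide

theorem move_two {n s k₀ : ℕ} (IH : Ready n s k₀) {h : GameHistory n 4} {L L' : List (Gad n)}
    (H : UInv h L) {a u b d v f : Fin n} {i j k l c : Fin 4}
    (hp : L.Perm (Gad.cherry a u b i j :: Gad.cherry d v f k l :: L'))
    (h1 : i ≠ k) (h2 : i ≠ l) (h3 : j ≠ k) (h4 : j ≠ l) (hc : Center c L')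
    (hk : 7 * s + 2 ≤ charge L + (k₀ + 1)) : Win n s (k₀ + 1) h := by
  have H' := H.perm hp
  rw [charge_perm hp, charge_cons, charge_cons] at hk
  simp only [Gad.chg] at hk
  have hnd := H'.nodup
  simp only [List.flatMap_cons, Gad.verts, List.cons_append, List.nil_append,
        List.nodup_cons, List.mem_cons, not_or] at hnd
  obtain ⟨hij, v1, v2⟩ := H'.valid (Gad.cherry a u b i j) (by simp)
  obtain ⟨hkl, v3, v4⟩ := H'.valid (Gad.cherry d v f k l) (by simp)
  have huv : u ≠ v := hnd.2.1.2.2.1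
  refine Win.query s(u, v) (by simpa using huv) ?_
  intro h' q hs hm
  have main : ∀ A B C D E : Fin n, (Gad.rain A B C D E).valid h' →
      ((Gad.rain A B C D E :: L').flatMap Gad.verts).Nodup → Win n s k₀ h' := by
    intro A B C D E hv hn
    refine IH h' (Gad.rain A B C D E :: L') ⟨?_, hn⟩ (Or.inl ⟨c, ?_⟩)
      (by rw [charge_cons]; simp only [Gad.chg]; omega)
    · intro g hg
      rcases List.mem_cons.1 hg with rfl | hg
      · exact hv
      · exact (H'.valid g (by simp [hg])).mono hs
    · intro a' u' b' i' j' hm'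
      rcases List.mem_cons.1 hm' with hm' | hm'
      · cases hm'
      · exact hc _ _ _ _ _ hm'
  have e1 : ¬ (s(a, u)).IsDiag := by simpa using hnd.1.1
  have e2 : ¬ (s(u, b)).IsDiag := by simpa using hnd.2.1.1
  have e3 : ¬ (s(d, v)).IsDiag := by simpa using hnd.2.2.2.1.1
  have e4 : ¬ (s(v, f)).IsDiag := by simpa using hnd.2.2.2.2.1.1
  have e5 : ¬ (s(u, v)).IsDiag := by simpa using huv
  rcases fin4_cases i j k l q hij h1 h2 h3 h4 hkl with rfl | rfl | rfl | rfl
  · refine main u v d f b ?_ ?_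
    · intro p
      rcases fin4_cases q j k l p hij h1 h2 h3 h4 hkl with rfl | rfl | rfl | rfl
      · exact ⟨_, hm, e5, by simp⟩
      · exact ⟨_, hs v2, e2, by simp⟩
      · exact ⟨_, hs v3, e3, by simp⟩
      · exact ⟨_, hs v4, e4, by simp⟩
    · simp only [List.flatMap_cons, Gad.verts, List.cons_append, List.nil_append,
        List.nodup_cons, List.mem_cons, not_or]
      grind
  · refine main u v d f a ?_ ?_
    · intro p
      rcases fin4_cases i q k l p hij h1 h2 h3 h4 hkl with rfl | rfl | rfl | rfl
      · exact ⟨_, hs v1, e1, by simp⟩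
      · exact ⟨_, hm, e5, by simp⟩
      · exact ⟨_, hs v3, e3, by simp⟩
      · exact ⟨_, hs v4, e4, by simp⟩
    · simp only [List.flatMap_cons, Gad.verts, List.cons_append, List.nil_append,
        List.nodup_cons, List.mem_cons, not_or]
      grind
  · refine main u v a b f ?_ ?_
    · intro p
      rcases fin4_cases i j q l p hij h1 h2 h3 h4 hkl with rfl | rfl | rfl | rfl
      · exact ⟨_, hs v1, e1, by simp⟩
      · exact ⟨_, hs v2, e2, by simp⟩
      · exact ⟨_, hm, e5, by simp⟩
      · exact ⟨_, hs v4, e4, by simp⟩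
    · simp only [List.flatMap_cons, Gad.verts, List.cons_append, List.nil_append,
        List.nodup_cons, List.mem_cons, not_or]
      grind
  · refine main u v a b d ?_ ?_
    · intro p
      rcases fin4_cases i j k q p hij h1 h2 h3 h4 hkl with rfl | rfl | rfl | rfl
      · exact ⟨_, hs v1, e1, by simp⟩
      · exact ⟨_, hs v2, e2, by simp⟩
      · exact ⟨_, hs v3, e3, by simp⟩
      · exact ⟨_, hm, e5, by simp⟩
    · simp only [List.flatMap_cons, Gad.verts, List.cons_append, List.nil_append,
        List.nodup_cons, List.mem_cons, not_or]
      grind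

theorem perm_two {α : Type*} {a b : α} {L : List α} (ha : a ∈ L) (hb : b ∈ L) (hab : a ≠ b) :
    ∃ L', L.Perm (a :: b :: L') := by
  obtain ⟨L', hp⟩ := exists_perm_cons_of_mem ha
  have : b ∈ L' := by
    rcases List.mem_cons.1 (hp.mem_iff.1 hb) with h | h
    · exact absurd h.symm hab
    · exact h
  obtain ⟨L'', hp'⟩ := exists_perm_cons_of_mem this
  exact ⟨L'', hp.trans (hp'.cons _)⟩

theorem Center.sub {n : ℕ} {c : Fin 4} {L L' : List (Gad n)} (hc : Center c L)
    (hs : ∀ g ∈ L', g ∈ L) : Center c L' :=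
  fun a u b i j hm => hc a u b i j (hs _ hm)

/-- The move joining edges of two colours that a path avoids. -/
theorem move_three {n s k₀ : ℕ} (IH : Ready n s k₀) {h : GameHistory n 4} {L : List (Gad n)}
    (H : UInv h L) {x y z w : Fin n} {i j p q c : Fin 4} {a u b : Fin n}
    (hx : Gad.edge x y i ∈ L) (hz : Gad.edge z w j ∈ L) (hij : i ≠ j)
    (hch : Gad.cherry a u b p q ∈ L) (h1 : i ≠ p) (h2 : i ≠ q) (h3 : j ≠ p) (h4 : j ≠ q)
    (hc : Center c L)
    (hk : 7 * s + 2 ≤ charge L + (k₀ + 1)) : Win n s (k₀ + 1) h := by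
  obtain ⟨L', hp⟩ := perm_two hx hz (fun he => hij (by cases he; rfl))
  have hsub : ∀ g ∈ L', g ∈ L := fun g hg => hp.mem_iff.2 (by simp [hg])
  have hc' : Center c L' := hc.sub hsub
  have hch' : Gad.cherry a u b p q ∈ L' := by
    have := hp.mem_iff.1 hch
    simpa using this
  have hpq : p ≠ q := (H.valid _ hch).1
  refine move_one IH H hp ?_ hk
  intro t
  by_cases ti : t = i
  · right
    subst ti
    exact ⟨hij, fun A U B => good_pair hc' hch' A U B t j h1 h2 h3 h4⟩
  by_cases tj : t = j
  · left
    subst tj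
    exact ⟨ti, fun A U B => good_pair hc' hch' A U B i t h1 h2 h3 h4⟩
  by_cases tc : Center t L'
  · left
    exact ⟨ti, fun A U B => good_center tc A U B i t (Or.inr rfl)⟩
  · have hcc := hc' _ _ _ _ _ hch'
    unfold Center at tc
    push Not at tc
    obtain ⟨a', u', b', p', q', hm, n1, n2⟩ := tc
    have hcc' := hc' _ _ _ _ _ hm
    have hpq' : p' ≠ q' := (H.valid _ (hsub _ hm)).1
    have key : (i = p' ∨ i = q') ∨ (i ≠ p' ∧ i ≠ q') := by tauto
    rcases key with key | key
    · right
      refine ⟨tj, fun A U B => good_pair hc' hm A U B t j n1 n2 ?_ ?_⟩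
      · rintro rfl
        rcases hcc with rfl | rfl <;> rcases hcc' with rfl | rfl <;> simp_all
      · rintro rfl
        rcases hcc with rfl | rfl <;> rcases hcc' with rfl | rfl <;> simp_all
    · left
      exact ⟨ti, fun A U B => good_pair hc' hm A U B i t key.1 key.2 n1 n2⟩

theorem weights_three : ∀ c i j : Fin 4, c ≠ i → c ≠ j → i ≠ j →
    ∑ x : Fin 4, (if x = c then 1 else if x = i ∨ x = j then 2 else 0) = 5 := by decide

theorem weights_two : ∀ c l : Fin 4, c ≠ l →
    ∑ x : Fin 4, (if x = c then 3 else if x = l then 2 else 0) = 5 := by decide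

theorem weights_one : ∀ c : Fin 4, ∑ x : Fin 4, (if x = c then 5 else 0) = 5 := by decide

theorem stuck_win {n s : ℕ} {h : GameHistory n 4} {L : List (Gad n)} (H : UInv h L)
    {c : Fin 4} (hc : Center c L)
    (h1 : ¬ ∃ c' x y z w j, Center c' L ∧ Gad.edge x y c' ∈ L ∧ Gad.edge z w j ∈ L ∧ c' ≠ j)
    (h2 : ¬ ∃ x y i z w j a u b p q, Gad.edge x y i ∈ L ∧ Gad.edge z w j ∈ L ∧ i ≠ j ∧
      Gad.cherry a u b p q ∈ L ∧ i ≠ p ∧ i ≠ q ∧ j ≠ p ∧ j ≠ q)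
    (hl : 5 * s + 1 ≤ (L.flatMap Gad.verts).length) :
    HistoryHasMatching n 4 (fun _ => s + 1) h := by
  by_cases h3 : ∃ x y i z w j, Gad.edge x y i ∈ L ∧ Gad.edge z w j ∈ L ∧ i ≠ j
  · obtain ⟨x, y, i, z, w, j, hx, hz, hij⟩ := h3
    have hci : c ≠ i := by
      rintro rfl
      exact h1 ⟨c, x, y, z, w, j, hc, hx, hz, hij⟩
    have hcj : c ≠ j := by
      rintro rfl
      exact h1 ⟨c, z, w, x, y, i, hc, hz, hx, hij.symm⟩
    have hcher : ∀ a u b p q, Gad.cherry a u b p q ∈ L →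
        (p = c ∧ q = i) ∨ (p = c ∧ q = j) ∨ (p = i ∧ q = c) ∨ (p = j ∧ q = c) := by
      intro a u b p q hm
      have hcc := hc _ _ _ _ _ hm
      by_contra hcon
      refine h2 ⟨x, y, i, z, w, j, a, u, b, p, q, hx, hz, hij, hm, ?_, ?_, ?_, ?_⟩ <;> grind
    have hni : ¬ Center i L := fun hi => h1 ⟨i, x, y, z, w, j, hi, hx, hz, hij⟩
    have hnj : ¬ Center j L := fun hj => h1 ⟨j, z, w, x, y, i, hj, hz, hx, hij.symm⟩
    unfold Center at hni hnj
    push Not at hni hnj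
    obtain ⟨a1, u1, b1, p1, q1, m1, n1, n1'⟩ := hni
    have hedge : ∀ a b l, Gad.edge a b l ∈ L → l = i ∨ l = j := by
      intro a b l hm
      by_contra hcon
      push Not at hcon
      have hlc : c ≠ l := by
        rintro rfl
        exact h1 ⟨c, a, b, x, y, i, hc, hm, hx, hci⟩
      refine h2 ⟨x, y, i, a, b, l, a1, u1, b1, p1, q1, hx, hm, hcon.1.symm, m1, n1, n1', ?_, ?_⟩
        <;> rcases hcher _ _ _ _ _ m1 with hh | hh | hh | hh
        <;> clear hcher h1 h2 hc <;> grind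
    refine win_of_weight _ (weights_three c i j hci hcj hij) L H ?_ hl
    intro g hg
    cases g with
    | edge a b l =>
      rcases hedge _ _ _ hg with rfl | rfl
      · simp [Gad.verts, Gad.cols, hci.symm]
      · simp [Gad.verts, Gad.cols, hcj.symm]
    | cherry a u b p q =>
      rcases hcher _ _ _ _ _ hg with ⟨rfl, rfl⟩ | ⟨rfl, rfl⟩ | ⟨rfl, rfl⟩ | ⟨rfl, rfl⟩
      · simp [Gad.verts, Gad.cols, Finset.sum_pair hci, hci.symm]
      · simp [Gad.verts, Gad.cols, Finset.sum_pair hcj, hcj.symm]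
      · simp [Gad.verts, Gad.cols, Finset.sum_pair hci.symm, hci.symm]
      · simp [Gad.verts, Gad.cols, Finset.sum_pair hcj.symm, hcj.symm]
    | rain _ _ _ _ _ =>
      exact (weights_three c i j hci hcj hij).ge
  by_cases h4 : ∃ x y l, Gad.edge x y l ∈ L ∧ c ≠ l
  · obtain ⟨x, y, l, hx, hcl⟩ := h4
    refine win_of_weight _ (weights_two c l hcl) L H ?_ hl
    intro g hg
    cases g with
    | edge a b l' =>
      have : l' = l := by
        by_contra hne
        exact h3 ⟨_, _, _, _, _, _, hg, hx, hne⟩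
      subst this
      simp [Gad.verts, Gad.cols, hcl.symm]
    | cherry a u b p q =>
      have hpq := (H.valid _ hg).1
      rcases hc _ _ _ _ _ hg with rfl | rfl
      · simp [Gad.verts, Gad.cols, Finset.sum_pair hpq]
      · simp [Gad.verts, Gad.cols, Finset.sum_pair hpq]
    | rain _ _ _ _ _ =>
      exact (weights_two c l hcl).ge
  · refine win_of_weight _ (weights_one c) L H ?_ hl
    intro g hg
    cases g with
    | edge a b l' =>
      have : c = l' := by
        by_contra hne
        exact h4 ⟨_, _, _, hg, hne⟩
      subst this
      simp [Gad.verts, Gad.cols]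
    | cherry a u b p q =>
      have hpq := (H.valid _ hg).1
      rcases hc _ _ _ _ _ hg with rfl | rfl
      · simp [Gad.verts, Gad.cols, Finset.sum_pair hpq] <;> omega
      · simp [Gad.verts, Gad.cols, Finset.sum_pair hpq]
    | rain _ _ _ _ _ =>
      exact (weights_one c).ge

theorem ready_all {n s : ℕ} (hn : n = 5 * s + 2) (k : ℕ) : Ready n s k := by
  induction k with
  | zero =>
    intro h L H _ hk
    exfalso
    obtain ⟨a, b, c, e1, e2⟩ := charge_bound L
    have := H.nodup.length_le_card
    rw [Fintype.card_fin] at this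
    have ha : a = s ∨ a + 1 ≤ s := by omega
    rcases ha with rfl | ha
    · have hb : b = 0 := by omega
      omega
    · have h7 : 2 * a + 2 ≤ 2 * s := by omega
      omega
  | succ k IH =>
    intro h L H hG hk
    rcases hG with ⟨c, hc⟩ | ⟨a, u, b, i, j, d, v, f, k', l, L', hp, h1, h2, h3, h4, c, hc⟩
    swap
    · exact move_two IH H hp h1 h2 h3 h4 hc hk
    by_cases h1 : ∃ c' x y z w j, Center c' L ∧ Gad.edge x y c' ∈ L ∧ Gad.edge z w j ∈ L ∧ c' ≠ j
    · obtain ⟨c', x, y, z, w, j, hc', hx, hz, hne⟩ := h1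
      obtain ⟨L', hp⟩ := perm_two hx hz (fun he => hne (by cases he; rfl))
      have hcL : Center c' L' := hc'.sub (fun g hg => hp.mem_iff.2 (by simp [hg]))
      refine move_one IH H hp ?_ hk
      intro q
      by_cases hq : q = c'
      · subst hq
        exact Or.inr ⟨hne, fun A U B => good_center hcL A U B _ _ (Or.inl rfl)⟩
      · exact Or.inl ⟨hq, fun A U B => good_center hcL A U B _ _ (Or.inl rfl)⟩
    by_cases h2 : ∃ x y i z w j a u b p q, Gad.edge x y i ∈ L ∧ Gad.edge z w j ∈ L ∧ i ≠ j ∧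
      Gad.cherry a u b p q ∈ L ∧ i ≠ p ∧ i ≠ q ∧ j ≠ p ∧ j ≠ q
    · obtain ⟨x, y, i, z, w, j, a, u, b, p, q, hx, hz, hij, hm, n1, n2, n3, n4⟩ := h2
      exact move_three IH H hx hz hij hm n1 n2 n3 n4 hc hk
    by_cases h3 : ∃ x y, x ∉ L.flatMap Gad.verts ∧ y ∉ L.flatMap Gad.verts ∧ x ≠ y
    · obtain ⟨x, y, hx, hy, hxy⟩ := h3
      refine Win.query s(x, y) (by simpa using hxy) ?_
      intro h' q hs hm
      refine IH h' (Gad.edge x y q :: L) ⟨?_, ?_⟩ (Or.inl ⟨c, ?_⟩)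
        (by rw [charge_cons]; simp only [Gad.chg]; omega)
      · intro g hg
        rcases List.mem_cons.1 hg with rfl | hg
        · exact hm
        · exact (H.valid g hg).mono hs
      · simp only [List.flatMap_cons, Gad.verts, List.cons_append, List.nil_append,
          List.nodup_cons, List.mem_cons, not_or]
        exact ⟨⟨hxy, hx⟩, hy, H.nodup⟩
      · intro a' u' b' i' j' hm'
        rcases List.mem_cons.1 hm' with hm' | hm'
        · cases hm'
        · exact hc _ _ _ _ _ hm'
    · refine Or.inl (stuck_win H hc h1 h2 ?_)
      push Not at h3
      have h5 : ((L.flatMap Gad.verts).toFinsetᶜ).card ≤ 1 := by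
        rw [Finset.card_le_one]
        intro a ha b hb
        rw [Finset.mem_compl, List.mem_toFinset] at ha hb
        exact h3 a b ha hb
      rw [Finset.card_compl, List.toFinset_card_of_nodup H.nodup, Fintype.card_fin] at h5
      omega

theorem win_start {n s : ℕ} (hn : n = 5 * s + 2) : Win n s (7 * s + 2) [] :=
  ready_all hn _ [] [] ⟨by simp, by simp⟩ (Or.inl ⟨0, fun _ _ _ _ _ hm => by simp at hm⟩)
    (by simp [charge])

theorem exists_unused {n : ℕ} (h : GameHistory n 4) (hl : h.length < n.choose 2) :
    ∃ e : Sym2 (Fin n), ¬ e.IsDiag ∧ e ∉ h.map Prod.fst := by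
  by_contra hcon
  push Not at hcon
  have hsub : (Finset.univ.filter (fun e : Sym2 (Fin n) => ¬ e.IsDiag)) ⊆
      (h.map Prod.fst).toFinset := by
    intro e he
    rw [Finset.mem_filter] at he
    rw [List.mem_toFinset]
    exact hcon e he.2
  have h1 := Finset.card_le_card hsub
  have h2 := List.toFinset_card_le (h.map Prod.fst)
  rw [List.length_map] at h2
  have h3 := Sym2.card_subtype_not_diag (α := Fin n)
  rw [Fintype.card_subtype, Fintype.card_fin] at h3
  omega

theorem builder_of_win {n s k : ℕ} (hk : k ≤ n.choose 2) (hw : Win n s k []) (hk0 : 0 < k) :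
    BuilderWinsIn n 4 (fun _ => s + 1) k := by
  classical
  have hne : Nonempty (Sym2 (Fin n)) := by
    obtain ⟨e, _⟩ := exists_unused (n := n) [] (by simp; omega)
    exact ⟨e⟩
  let good : GameHistory n 4 → Sym2 (Fin n) → Prop := fun h e =>
    ¬ e.IsDiag ∧ e ∉ h.map Prod.fst ∧ (HistoryHasMatching n 4 (fun _ => s + 1) h ∨
      ∀ c, Win n s (k - h.length - 1) (h ++ [(e, c)]))
  let B : BuilderStrategy n 4 := fun h => Classical.epsilon (good h)
  have hstep : ∀ h : GameHistory n 4, h.length < k → Win n s (k - h.length) h →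
      good h (B h) := by
    intro h hl hW
    apply Classical.epsilon_spec (p := good h)
    obtain ⟨m, hm⟩ : ∃ m, k - h.length = m + 1 := ⟨k - h.length - 1, by omega⟩
    rw [hm] at hW
    rcases hW with hW | ⟨e, h1, h2, h3⟩
    · obtain ⟨e, h1, h2⟩ := exists_unused h (by omega)
      exact ⟨e, h1, h2, Or.inl hW⟩
    · refine ⟨e, h1, h2, Or.inr ?_⟩
      rw [hm]
      exact h3
  have hmono : ∀ (h : GameHistory n 4) p, HistoryHasMatching n 4 (fun _ => s + 1) h →
      HistoryHasMatching n 4 (fun _ => s + 1) (h ++ [p]) := by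
    rintro h p ⟨i, M, h1, h2, h3⟩
    exact ⟨i, M, h1, h2, fun e he => by simp [h3 e he]⟩
  have hnow : ∀ m (h : GameHistory n 4), HistoryHasMatching n 4 (fun _ => s + 1) h →
      Win n s m h := by
    intro m h hh
    cases m with
    | zero => exact hh
    | succ m => exact Or.inl hh
  have inv : ∀ P : PainterStrategy n 4, ∀ j ≤ k, (gamePlay B P j).length = j ∧
      Win n s (k - j) (gamePlay B P j) := by
    intro P j
    induction j with
    | zero => exact fun _ => ⟨rfl, hw⟩
    | succ j ih =>
      intro hj
      obtain ⟨hl, hW⟩ := ih (by omega)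
      refine ⟨by simp [gamePlay, hl], ?_⟩
      obtain ⟨-, -, hg⟩ := hstep (gamePlay B P j) (by omega) (by rw [hl]; exact hW)
      simp only [gamePlay]
      rcases hg with hg | hg
      · exact hnow _ _ (hmono _ _ hg)
      · have := hg (P (gamePlay B P j) (B (gamePlay B P j)))
        rw [hl] at this
        exact this
  refine ⟨B, ?_, ?_⟩
  · intro P j hj
    obtain ⟨hl, hW⟩ := inv P j (by omega)
    have := hstep (gamePlay B P j) (by omega) (by rw [hl]; exact hW)
    exact ⟨this.1, this.2.1⟩
  · intro P
    have := (inv P k le_rfl).2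
    rw [Nat.sub_self] at this
    exact this

theorem builder_base : BuilderWinsIn 2 4 (fun _ => 0 + 1) 1 := by
  refine ⟨fun _ => s(0, 1), ?_, ?_⟩
  · intro P j hj
    obtain rfl : j = 0 := by omega
    refine ⟨by simp, by simp [gamePlay]⟩
  · intro P
    refine ⟨P [] s(0, 1), {s(0, 1)}, by simp, ⟨by simp, by simp⟩, ?_⟩
    simp [gamePlay]

theorem upper_bound_s3 (s : ℕ) : ∃ k ≤ 7 * s + 2, BuilderWinsIn (5 * s + 2) 4 (fun _ => s + 1) k := by
  rcases Nat.eq_zero_or_pos s with rfl | hs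
  · exact ⟨1, by omega, builder_base⟩
  · refine ⟨7 * s + 2, le_rfl, builder_of_win ?_ (win_start rfl) (by omega)⟩
    rw [Nat.choose_two_right, Nat.le_div_iff_mul_le (by norm_num)]
    have : 5 * s + 2 - 1 = 5 * s + 1 := by omega
    rw [this]
    nlinarith

/-- For `r ≥ 1` and `n₄ = 5r − 3 = R₄(rK₂)`, we have `7r − 6 ≤ R̃₄(rK₂; n₄) ≤ 7r − 5`. -/
theorem restrictedOnlineRamsey_four_colours (r : ℕ) (hr : 1 ≤ r) :
    7 * r - 6 ≤ restrictedOnlineRamsey (5 * r - 3) 4 (fun _ => r) ∧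
      restrictedOnlineRamsey (5 * r - 3) 4 (fun _ => r) ≤ 7 * r - 5 := by
  obtain ⟨s, rfl⟩ : ∃ s, r = s + 1 := ⟨r - 1, by omega⟩
  have e1 : 5 * (s + 1) - 3 = 5 * s + 2 := by omega
  rw [e1]
  obtain ⟨k, hk, hB⟩ := upper_bound_s3 s
  constructor
  · have : 7 * s + 1 ≤ restrictedOnlineRamsey (5 * s + 2) 4 (fun _ => s + 1) :=
      le_csInf ⟨k, hB⟩ (fun m hm => lower_bound_s3 rfl hm)
    omega
  · have : restrictedOnlineRamsey (5 * s + 2) 4 (fun _ => s + 1) ≤ k := Nat.sInf_le hB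
    omega
end
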